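/- arXiv:2009.04243 — 7 statements merged into one kernel-verified Lean document; each statement's English description precedes it below -/
import Mathlib

section
/- Let K be a field and k ≥ 1 a natural number. Let r, t, a ∈ K satisfy r^(k+1) = r, t^(k+1) = t, and r ≠ t. Then the 2×2 upper triangular matrix M = !![r, a; 0, t] satisfies M^(k+1) = M, for every choice of a. -/
/-- Powers of a `2×2` upper triangular matrix with distinct diagonal entries. -/
theorem upperTriangular_two_pow {K : Type*} [Field K] {r t : K} (hrt : r ≠ t) (a : K) (n : ℕ) :
    (!![r, a; 0, t]) ^ n = !![r ^ n, a * ((r ^ n - t ^ n) / (r - t)); 0, t ^ n] := by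
  have h : r - t ≠ 0 := sub_ne_zero.mpr hrt
  induction n with
  | zero => simp [Matrix.one_fin_two]
  | succ n ih =>
    rw [pow_succ, ih, Matrix.mul_fin_two]
    have key : r ^ n * a + a * ((r ^ n - t ^ n) / (r - t)) * t
        = a * ((r ^ (n + 1) - t ^ (n + 1)) / (r - t)) := by
      field_simp
      ring
    simp [key, pow_succ]

/-- If `r^(k+1) = r`, `t^(k+1) = t` and `r ≠ t`, then the `2×2` upper triangular matrix
`!![r, a; 0, t]` is `(k+1)`-potent for every choice of `a`. -/
theorem stmt_4 {K : Type*} [Field K] (k : ℕ) (hk : 1 ≤ k) (r t a : K)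
    (hr : r ^ (k + 1) = r) (ht : t ^ (k + 1) = t) (hrt : r ≠ t) :
    (!![r, a; 0, t]) ^ (k + 1) = !![r, a; 0, t] := by
  rw [upperTriangular_two_pow hrt, hr, ht, div_self (sub_ne_zero.mpr hrt), mul_one]
end

section
/- Let K be a field, n and k natural numbers with k ≥ 1, and let r, t, x ∈ K with r^(k+1) = r, t^(k+1) = t and r ≠ t. Let a : Fin n → K be a row vector, b : Fin n → K a column vector, u an n×n matrix over K, and let A = [[r, a, x],[0, u, b],[0, 0, t]] be the corresponding (n+2)×(n+2) upper block triangular matrix. If the block matrices [[r, a],[0, u]] and [[u, b],[0, t]] are both (k+1)-potent, then A^(k+1) = A (for every value of the corner entry x). -/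
/-- Powers of square matrices intertwined by a rectangular matrix are intertwined by it too. -/
theorem Matrix.pow_mul_eq_mul_pow_of_mul_eq_mul {R m n : Type*} [Semiring R]
    [Fintype m] [DecidableEq m] [Fintype n] [DecidableEq n]
    {A : Matrix m m R} {B : Matrix n n R} {J : Matrix m n R} (h : A * J = J * B) (l : ℕ) :
    A ^ l * J = J * B ^ l := by
  induction l with
  | zero => simp
  | succ l ih => rw [pow_succ, Matrix.mul_assoc, h, ← Matrix.mul_assoc, ih, Matrix.mul_assoc,
      ← pow_succ]

/-- Let `r^(k+1) = r`, `t^(k+1) = t`, `r ≠ t`. If the block matrices `[[r, a], [0, u]]` and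
`[[u, b], [0, t]]` are `(k+1)`-potent, then so is `A = [[r, a, x], [0, u, b], [0, 0, t]]`,
for every value of the corner entry `x`. -/
theorem stmt_6 {K : Type*} [Field K] (n k : ℕ) (hk : 1 ≤ k) (r t x : K)
    (hr : r ^ (k + 1) = r) (ht : t ^ (k + 1) = t) (hrt : r ≠ t)
    (a : Fin n → K) (b : Fin n → K) (u : Matrix (Fin n) (Fin n) K)
    (hru : (Matrix.fromBlocks (Matrix.of fun (_ _ : Unit) => r)
        (Matrix.of fun (_ : Unit) j => a j) 0 u) ^ (k + 1)
      = Matrix.fromBlocks (Matrix.of fun (_ _ : Unit) => r)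
        (Matrix.of fun (_ : Unit) j => a j) 0 u)
    (hut : (Matrix.fromBlocks u (Matrix.of fun i (_ : Unit) => b i)
        0 (Matrix.of fun (_ _ : Unit) => t)) ^ (k + 1)
      = Matrix.fromBlocks u (Matrix.of fun i (_ : Unit) => b i)
        0 (Matrix.of fun (_ _ : Unit) => t)) :
    (Matrix.fromBlocks (Matrix.of fun (_ _ : Unit) => r)
        (Matrix.of fun (_ : Unit) j => Sum.elim a (fun (_ : Unit) => x) j) 0
        (Matrix.fromBlocks u (Matrix.of fun i (_ : Unit) => b i) 0
          (Matrix.of fun (_ _ : Unit) => t))) ^ (k + 1)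
      = Matrix.fromBlocks (Matrix.of fun (_ _ : Unit) => r)
        (Matrix.of fun (_ : Unit) j => Sum.elim a (fun (_ : Unit) => x) j) 0
        (Matrix.fromBlocks u (Matrix.of fun i (_ : Unit) => b i) 0
          (Matrix.of fun (_ _ : Unit) => t)) := by
  set B := Matrix.fromBlocks (Matrix.of fun (_ _ : Unit) => r)
    (Matrix.of fun (_ : Unit) j => a j) 0 u with hB
  set M := Matrix.fromBlocks u (Matrix.of fun i (_ : Unit) => b i)
    0 (Matrix.of fun (_ _ : Unit) => t) with hM
  set A := Matrix.fromBlocks (Matrix.of fun (_ _ : Unit) => r)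
    (Matrix.of fun (_ : Unit) j => Sum.elim a (fun (_ : Unit) => x) j) 0 M with hA
  let f : Unit ⊕ Fin n → Unit ⊕ (Fin n ⊕ Unit) := Sum.map id Sum.inl
  let J : Matrix (Unit ⊕ (Fin n ⊕ Unit)) (Unit ⊕ Fin n) K :=
    (1 : Matrix (Unit ⊕ (Fin n ⊕ Unit)) (Unit ⊕ (Fin n ⊕ Unit)) K).submatrix id f
  let P : Matrix (Fin n ⊕ Unit) (Unit ⊕ (Fin n ⊕ Unit)) K :=
    (1 : Matrix (Unit ⊕ (Fin n ⊕ Unit)) (Unit ⊕ (Fin n ⊕ Unit)) K).submatrix Sum.inr id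
  have mul_J (X : Matrix (Unit ⊕ (Fin n ⊕ Unit)) (Unit ⊕ (Fin n ⊕ Unit)) K) (i j) :
      (X * J) i j = X i (f j) := by
    simp [J, Matrix.mul_apply, Matrix.one_apply]
  have P_mul (X : Matrix (Unit ⊕ (Fin n ⊕ Unit)) (Unit ⊕ (Fin n ⊕ Unit)) K) (i j) :
      (P * X) i j = X (Sum.inr i) j := by
    simp [P, Matrix.mul_apply, Matrix.one_apply]
  have hAJ : A * J = J * B := by
    ext i j
    rw [mul_J]
    rcases i with i | i | i <;> rcases j with j | j <;>
      simp [hA, hB, hM, J, f, Matrix.mul_apply, Matrix.one_apply]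
  have hPA : M * P = P * A := by
    ext i j
    rw [P_mul]
    rcases i with i | i <;> rcases j with j | j | j <;>
      simp [hA, hM, P, Matrix.mul_apply, Matrix.one_apply]
  have left_cols (i j) : (A ^ (k + 1)) i (f j) = A i (f j) := by
    rw [← mul_J (A ^ (k + 1)), ← mul_J A, Matrix.pow_mul_eq_mul_pow_of_mul_eq_mul hAJ, hru, hAJ]
  have lower_rows (i j) : (A ^ (k + 1)) (Sum.inr i) j = A (Sum.inr i) j := by
    rw [← P_mul (A ^ (k + 1)), ← P_mul A, ← Matrix.pow_mul_eq_mul_pow_of_mul_eq_mul hPA, hut, hPA]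
  have corner : (A ^ (k + 1)) (Sum.inl ()) (Sum.inr (Sum.inr ()))
      = A (Sum.inl ()) (Sum.inr (Sum.inr ())) := by
    set D := A ^ (k + 1) - A with hD
    have hcomm : A * D = D * A := by
      rw [hD, mul_sub, sub_mul, ← pow_succ, ← pow_succ']
    have hleft (i j) : D i (f j) = 0 := by simp [hD, left_cols]
    have hlower (i j) : D (Sum.inr i) j = 0 := by simp [hD, lower_rows]
    have hl : D (Sum.inl ()) (Sum.inl ()) = 0 := hleft _ (Sum.inl ())
    have hm (j : Fin n) : D (Sum.inl ()) (Sum.inr (Sum.inl j)) = 0 := hleft _ (Sum.inr j)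
    have hentry := congrFun (congrFun hcomm (Sum.inl ())) (Sum.inr (Sum.inr ()))
    have hrt' : r * D (Sum.inl ()) (Sum.inr (Sum.inr ()))
        = D (Sum.inl ()) (Sum.inr (Sum.inr ())) * t := by
      simpa [Matrix.mul_apply, hlower, hl, hm, hA, hM] using hentry
    have hzero : (r - t) * D (Sum.inl ()) (Sum.inr (Sum.inr ())) = 0 := by
      linear_combination hrt'
    exact sub_eq_zero.mp ((mul_eq_zero.mp hzero).resolve_left (sub_ne_zero.mpr hrt))
  ext i j
  rcases i with i | i
  · rcases j with j | j | j
    · exact left_cols _ (Sum.inl j)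
    · exact left_cols _ (Sum.inr j)
    · exact corner
  · exact lower_rows i j
end

section
/- Let K be a finite field with q elements whose characteristic divides neither k nor k+1, where k ≥ 1 is a natural number, and let ω ∈ K be a kth root of unity such that the k+1 elements 0, 1, ω, ω², …, ω^(k−1) are pairwise distinct. Then for every n, the number of n×n upper triangular matrices A over K satisfying A^(k+1) = A and having every diagonal entry in the set D = {0, 1, ω, …, ω^(k−1)} equals Σ_{(n₀,n₁,…,n_k)} (n! / (n₀!·n₁!⋯n_k!)) · q^(Σ_{0 ≤ i < j ≤ k} n_i·n_j), where the sum ranges over all tuples of natural numbers (n₀, …, n_k) with n₀ + n₁ + ⋯ + n_k = n. -/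
open Polynomial Finset

/-- The number of maps `Fin n → α` with prescribed fibre sizes is a multinomial coefficient. -/
lemma card_filter_fiberCard_eq_multinomial {α : Type*} [Fintype α] [DecidableEq α] {n : ℕ}
    {v : α → ℕ} (hv : v ∈ piAntidiag univ n) :
    #{f : Fin n → α | (fun a ↦ #{x | f x = a}) = v} = Nat.multinomial univ v := by
  have h := (sum_pow' univ (fun a : α ↦ (MvPolynomial.X a : MvPolynomial α ℕ)) n).symm.trans
    (sum_pow_eq_sum_piAntidiag univ (fun a : α ↦ (MvPolynomial.X a : MvPolynomial α ℕ)) n)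
  have hL (f : Fin n → α) : ∏ i, (MvPolynomial.X (f i) : MvPolynomial α ℕ) =
      MvPolynomial.monomial (Finsupp.equivFunOnFinite.symm fun a ↦ #{x | f x = a}) 1 := by
    rw [MvPolynomial.monomial_eq, Finsupp.prod_fintype _ _ (by simp)]
    simp [← prod_fiberwise' univ f, prod_const]
  have hR (w : α → ℕ) : ∏ a, (MvPolynomial.X a : MvPolynomial α ℕ) ^ w a =
      MvPolynomial.monomial (Finsupp.equivFunOnFinite.symm w) 1 := by
    rw [MvPolynomial.monomial_eq, Finsupp.prod_fintype _ _ (by simp)]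
    simp
  simp_rw [hL, hR, ← nsmul_eq_mul] at h
  replace h := congrArg (MvPolynomial.coeff (Finsupp.equivFunOnFinite.symm v)) h
  simp only [MvPolynomial.coeff_sum, MvPolynomial.coeff_monomial, Equiv.apply_eq_iff_eq,
    MvPolynomial.coeff_smul] at h
  simp only [smul_eq_mul, mul_ite, mul_one, mul_zero, sum_ite_eq', hv, if_true,
    Fintype.piFinset_univ] at h
  rw [card_filter, h]

lemma sum_comp_fiberCard {α : Type*} [Fintype α] [DecidableEq α] (n : ℕ) (F : (α → ℕ) → ℕ) :
    ∑ f : Fin n → α, F (fun a ↦ #{x | f x = a}) =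
      ∑ v ∈ piAntidiag univ n, Nat.multinomial univ v * F v := by
  rw [← sum_fiberwise_of_maps_to (t := piAntidiag univ n) (g := fun f a ↦ #{x | f x = a})]
  · refine sum_congr rfl fun v hv ↦ ?_
    rw [← card_filter_fiberCard_eq_multinomial hv, ← smul_eq_mul, ← sum_const]
    refine sum_congr rfl fun f hf ↦ ?_
    rw [(mem_filter.1 hf).2]
  · intro f _
    simp [← card_eq_sum_card_fiberwise]

lemma card_lt_and_ne_eq_card_map_lt {m α : Type*} [Fintype m] [LinearOrder m] [LinearOrder α]
    (f : m → α) :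
    #{p : m × m | p.1 < p.2 ∧ f p.1 ≠ f p.2} = #{p : m × m | f p.1 < f p.2} := by
  refine card_bij' (fun p _ ↦ if f p.1 < f p.2 then p else p.swap)
    (fun p _ ↦ if p.1 < p.2 then p else p.swap) ?_ ?_ ?_ ?_ <;> grind

lemma card_map_lt_eq_sum_fiberCard {m α : Type*} [Fintype m] [Fintype α] [LinearOrder α]
    [LocallyFiniteOrderTop α] (f : m → α) :
    #{p : m × m | f p.1 < f p.2} =
      ∑ a, ∑ b ∈ Ioi a, #{x | f x = a} * #{x | f x = b} := by
  simp_rw [← card_product, sum_sigma' univ (fun a ↦ Ioi a)]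
  rw [← card_sigma]
  refine card_bij' (fun p _ ↦ ⟨⟨f p.1, f p.2⟩, p⟩) (fun p _ ↦ p.2) ?_ ?_ ?_ ?_ <;>
    simp +contextual

lemma mul_aeval_eq_aeval_mul {R A : Type*} [CommSemiring R] [Semiring A] [Algebra R A]
    {u a b : A} (h : u * a = b * u) (p : R[X]) : u * aeval a p = aeval b p * u := by
  induction p using Polynomial.induction_on with
  | C r => simp [Algebra.commutes]
  | add p q hp hq => simp [mul_add, add_mul, hp, hq]
  | monomial n r hp =>
    rw [pow_succ, ← mul_assoc, map_mul, aeval_X, map_mul _ _ X, aeval_X, ← mul_assoc,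
      hp, mul_assoc, h, mul_assoc]

lemma nodal_dvd_X_sub_C_mul_basis {K : Type*} [Field K] [DecidableEq K] {s : Finset K} {d : K}
    (hd : d ∈ s) : Lagrange.nodal s id ∣ (X - C d) * Lagrange.basis s id d := by
  rw [Lagrange.nodal_eq_mul_nodal_erase hd]
  refine mul_dvd_mul dvd_rfl ?_
  rw [Lagrange.nodal_eq, Lagrange.basis]
  refine prod_dvd_prod_of_dvd _ _ fun e _ ↦ ?_
  exact Dvd.intro_left _ rfl

lemma nodal_eq_X_pow_sub_X {K : Type*} [Field K] {s : Finset K} {k : ℕ} (hk : 1 ≤ k)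
    (hcard : #s = k + 1) (hs : ∀ d ∈ s, d ^ (k + 1) = d) :
    Lagrange.nodal s id = (X ^ (k + 1) - X : K[X]) := by
  have hdeg : (X : K[X]).degree < (X ^ (k + 1) : K[X]).degree := by
    rw [degree_X, degree_X_pow]
    exact_mod_cast Nat.lt_succ_of_le hk
  have hmonic : (X ^ (k + 1) - X : K[X]).Monic := (monic_X_pow _).sub_of_left hdeg
  have hd' : (X ^ (k + 1) - X : K[X]).degree = #s := by
    rw [degree_sub_eq_left_of_degree_lt hdeg, degree_X_pow, hcard]
  refine eq_of_degree_le_of_eval_finset_eq s Lagrange.degree_nodal.le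
    (Lagrange.degree_nodal.trans hd'.symm) ?_ fun d hd ↦ ?_
  · rw [Lagrange.nodal_monic.leadingCoeff, hmonic.leadingCoeff]
  · exact (Lagrange.eval_nodal_at_node (v := id) hd).trans (by simp [hs d hd])

namespace Matrix

lemma aeval_diagonal {m K : Type*} [Fintype m] [DecidableEq m] [CommSemiring K] (c : m → K)
    (p : K[X]) : aeval (diagonal c) p = diagonal fun i ↦ p.eval (c i) := by
  have := aeval_algHom_apply (diagonalAlgHom K (n := m) (α := K)) c p
  simp only [diagonalAlgHom_apply] at this
  rw [this]
  congr! 1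
  ext i
  simp [aeval_pi]

variable {m K : Type*} [Fintype m] [LinearOrder m] [Field K]

lemma IsUpperTriangular.mul_apply_self {A B : Matrix m m K} (hA : A.IsUpperTriangular)
    (hB : B.IsUpperTriangular) (i : m) : (A * B) i i = A i i * B i i := by
  rw [mul_apply, sum_eq_single i _ (by simp)]
  intro j _ hj
  rcases lt_or_gt_of_ne hj with h | h
  · rw [hA h, zero_mul]
  · rw [hB h, mul_zero]

lemma IsUpperTriangular.aeval {A : Matrix m m K} (hA : A.IsUpperTriangular) (p : K[X]) :
    (aeval A p).IsUpperTriangular :=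
  Algebra.adjoin_le (S := blockTriangularSubalgebra K K id) (by simpa using hA)
    (aeval_mem_adjoin_singleton K A)

lemma IsUpperTriangular.aeval_apply_self {A : Matrix m m K} (hA : A.IsUpperTriangular)
    (p : K[X]) (i : m) : Polynomial.aeval A p i i = p.eval (A i i) := by
  induction p using Polynomial.induction_on with
  | C a => simp [algebraMap_matrix_apply]
  | add p q hp hq => simp [hp, hq]
  | monomial n a h =>
    rw [pow_succ, ← mul_assoc, map_mul, aeval_X, (hA.aeval _).mul_apply_self hA, h]
    simp

lemma IsUpperTriangular.isUnit_of_apply_self_eq_one {U : Matrix m m K}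
    (hU : U.IsUpperTriangular) (hd : ∀ i, U i i = 1) : IsUnit U := by
  simp [isUnit_iff_isUnit_det, det_of_isUpperTriangular hU, hd]

lemma IsUpperTriangular.inv {U : Matrix m m K} (hU : U.IsUpperTriangular) (h : IsUnit U) :
    U⁻¹.IsUpperTriangular :=
  have := h.invertible
  blockTriangular_inv_of_blockTriangular hU

lemma IsUpperTriangular.inv_apply_self {U : Matrix m m K} (hU : U.IsUpperTriangular)
    (hd : ∀ i, U i i = 1) (i : m) : U⁻¹ i i = 1 := by
  have h := hU.isUnit_of_apply_self_eq_one hd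
  have := hU.mul_apply_self (hU.inv h) i
  rwa [mul_nonsing_inv _ ((isUnit_iff_isUnit_det _).1 h), one_apply_eq, hd, one_mul,
    eq_comm] at this

lemma mul_aeval_basis {s : Finset K} [DecidableEq K] {A : Matrix m m K}
    (hA : aeval A (Lagrange.nodal s id) = 0) {d : K} (hd : d ∈ s) :
    A * aeval A (Lagrange.basis s id d) = d • aeval A (Lagrange.basis s id d) := by
  obtain ⟨r, hr⟩ := nodal_dvd_X_sub_C_mul_basis hd
  have := congrArg (aeval A) hr
  rw [map_mul _ _ r, hA, zero_mul, map_mul, map_sub, aeval_X, aeval_C, sub_mul, sub_eq_zero] at this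
  rw [this, Algebra.smul_def]

/-- `W` is upper triangular and agrees with the identity matrix at every pair of indices on which
`c` takes the same value. -/
def IsUnitriangularFor (c : m → K) (W : Matrix m m K) : Prop :=
  W.IsUpperTriangular ∧ ∀ i j, c i = c j → W i j = (1 : Matrix m m K) i j

lemma IsUnitriangularFor.isUnit {c : m → K} {W : Matrix m m K} (hW : W.IsUnitriangularFor c) :
    IsUnit W :=
  hW.1.isUnit_of_apply_self_eq_one fun i ↦ by simp [hW.2 i i rfl]

lemma IsUnitriangularFor.conj_injOn (c : m → K) :
    Set.InjOn (fun W ↦ W⁻¹ * diagonal c * W) {W | W.IsUnitriangularFor c} := by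
  intro W hW W' hW' h
  have hu := (isUnit_iff_isUnit_det _).1 (IsUnitriangularFor.isUnit hW)
  have hu' := (isUnit_iff_isUnit_det _).1 (IsUnitriangularFor.isUnit hW')
  set V := W' * W⁻¹ with hV
  have hVW : V * W = W' := nonsing_inv_mul_cancel_right _ _ hu
  have hcomm : V * diagonal c = diagonal c * V := by
    calc V * diagonal c = W' * (W⁻¹ * diagonal c * W) * W⁻¹ := by
          simp only [hV, mul_assoc, mul_nonsing_inv _ hu, mul_one]
      _ = diagonal c * V := by
          simp only at h
          rw [h, mul_assoc W'⁻¹, mul_nonsing_inv_cancel_left _ _ hu', hV, mul_assoc]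
  have hzero (i j : m) (hij : c i ≠ c j) : V i j = 0 := by
    have := congrFun₂ hcomm i j
    rw [mul_diagonal, diagonal_mul, mul_comm, ← sub_eq_zero, ← sub_mul] at this
    exact (mul_eq_zero.1 this).resolve_left (sub_ne_zero.2 hij.symm)
  have hone : V = 1 := by
    ext i j
    by_cases hij : c i = c j
    · rw [← hW'.2 i j hij, ← hVW, mul_apply, sum_eq_single j]
      · simp [hW.2 j j rfl]
      · intro l _ hl
        by_cases hil : c i = c l
        · rw [hW.2 l j (hil.symm.trans hij), one_apply_ne hl, mul_zero]
        · rw [hzero i l hil, zero_mul]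
      · simp
    · rw [hzero i j hij, one_apply_ne (fun h ↦ hij (congrArg c h))]
  rw [← hVW, hone, one_mul]

lemma IsUnitriangularFor.conj_mem {s : Finset K} {c : m → K} (hc : ∀ i, c i ∈ s)
    {W : Matrix m m K} (hW : W.IsUnitriangularFor c) :
    aeval (W⁻¹ * diagonal c * W) (Lagrange.nodal s id) = 0 ∧
      (W⁻¹ * diagonal c * W).IsUpperTriangular ∧ ∀ i, (W⁻¹ * diagonal c * W) i i = c i := by
  have hu := (isUnit_iff_isUnit_det _).1 hW.isUnit
  have hd (i) : W i i = 1 := by simp [hW.2 i i rfl]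
  have hinv := hW.1.inv hW.isUnit
  have hD : (diagonal c).IsUpperTriangular := blockTriangular_diagonal c
  have hWD : (W⁻¹ * diagonal c).IsUpperTriangular := hinv.mul hD
  refine ⟨?_, hWD.mul hW.1, fun i ↦ ?_⟩
  · have h := mul_aeval_eq_aeval_mul (u := W) (a := W⁻¹ * diagonal c * W) (b := diagonal c)
      (by rw [mul_assoc, mul_nonsing_inv_cancel_left _ _ hu]) (Lagrange.nodal s id)
    have hz : (fun i ↦ (Lagrange.nodal s id).eval (c i)) = 0 :=
      funext fun i ↦ Lagrange.eval_nodal_at_node (v := id) (hc i)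
    rw [aeval_diagonal, hz, diagonal_zero', zero_mul] at h
    exact hW.isUnit.mul_right_eq_zero.1 h
  · rw [hWD.mul_apply_self hW.1, hinv.mul_apply_self hD, hW.1.inv_apply_self hd, hd]
    simp

/-- `W⁻¹` has as `j`-th column the `j`-th column of `P (A)`, where `P` is the Lagrange basis
polynomial of `s` at `c j`. -/
lemma exists_isUnitriangularFor_conj_eq [DecidableEq K] {s : Finset K} {c : m → K}
    (hc : ∀ i, c i ∈ s) {A : Matrix m m K} (hA : aeval A (Lagrange.nodal s id) = 0)
    (hup : A.IsUpperTriangular) (hd : ∀ i, A i i = c i) :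
    ∃ W : Matrix m m K, W.IsUnitriangularFor c ∧ W⁻¹ * diagonal c * W = A := by
  have hself {d : K} (hds : d ∈ s) : (Lagrange.basis s id d).eval d = 1 :=
    Lagrange.eval_basis_self (v := id) Function.injective_id.injOn hds
  set U : Matrix m m K := of fun i j ↦ aeval A (Lagrange.basis s id (c j)) i j with hU
  have hUup : U.IsUpperTriangular := fun i j hij ↦ hup.aeval _ hij
  have hUd (i) : U i i = 1 := by
    rw [hU, of_apply, hup.aeval_apply_self, hd, hself (hc i)]
  have hunit := hUup.isUnit_of_apply_self_eq_one hUd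
  have hu := (isUnit_iff_isUnit_det _).1 hunit
  have hmul (M : Matrix m m K) (i j) :
      (M * U) i j = (M * aeval A (Lagrange.basis s id (c j))) i j := by
    simp [mul_apply, hU]
  have hAU : A * U = U * diagonal c := by
    ext i j
    rw [hmul, mul_aeval_basis hA (hc j), mul_diagonal, smul_apply, smul_eq_mul, mul_comm]
    rfl
  have hconj : U⁻¹ * A = diagonal c * U⁻¹ := by
    rw [← mul_nonsing_inv_cancel_right _ A hu, hAU]
    simp only [mul_assoc]
    rw [nonsing_inv_mul_cancel_left _ _ hu]
  refine ⟨U⁻¹, ⟨hUup.inv hunit, fun i j hij ↦ ?_⟩, ?_⟩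
  · rw [← nonsing_inv_mul _ hu, hmul, mul_aeval_eq_aeval_mul hconj, aeval_diagonal, diagonal_mul,
      hij, hself (hc j), one_mul]
  · rw [mul_assoc, ← hconj, nonsing_inv_nonsing_inv _ hu, mul_nonsing_inv_cancel_left _ _ hu]

lemma card_isUnitriangularFor [Fintype K] [DecidableEq K] (c : m → K) :
    Nat.card {W : Matrix m m K // W.IsUnitriangularFor c} =
      Fintype.card K ^ #{p : m × m | p.1 < p.2 ∧ c p.1 ≠ c p.2} := by
  let e : {W : Matrix m m K // W.IsUnitriangularFor c} ≃
      ({p : m × m // p.1 < p.2 ∧ c p.1 ≠ c p.2} → K) :=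
    { toFun W p := W.1 p.1.1 p.1.2
      invFun g := ⟨of fun i j ↦ if h : i < j ∧ c i ≠ c j then g ⟨(i, j), h⟩
          else (1 : Matrix m m K) i j, by
        refine ⟨fun i j (hij : j < i) ↦ ?_, fun i j hij ↦ ?_⟩
        · simp [hij.not_gt, one_apply_ne hij.ne']
        · simp [hij]⟩
      left_inv W := by
        ext i j
        by_cases h : c i = c j
        · simp [h, W.2.2 i j h]
        · rcases lt_trichotomy i j with hij | rfl | hij
          · simp [h, hij]
          · exact (h rfl).elim
          · simp [hij.not_gt, one_apply_ne hij.ne', W.2.1 hij]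
      right_inv g := by
        ext p
        simp [p.2.1, p.2.2] }
  rw [Nat.card_congr e, Nat.card_eq_fintype_card, Fintype.card_fun, Fintype.card_subtype]

/-- The upper triangular matrices with diagonal `c` annihilated by `∏ d ∈ s, (X - d)` are the
conjugates `W⁻¹ * diagonal c * W` with `W` unitriangular for `c`, each obtained exactly once. -/
lemma card_isUpperTriangular_aeval_nodal_eq_zero [Fintype K] [DecidableEq K] {s : Finset K}
    {c : m → K} (hc : ∀ i, c i ∈ s) :
    Nat.card {A : Matrix m m K // aeval A (Lagrange.nodal s id) = 0 ∧
        A.IsUpperTriangular ∧ ∀ i, A i i = c i} =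
      Fintype.card K ^ #{p : m × m | p.1 < p.2 ∧ c p.1 ≠ c p.2} := by
  rw [← card_isUnitriangularFor]
  symm
  refine Nat.card_eq_of_bijective (fun W ↦ ⟨_, W.2.conj_mem hc⟩) ⟨fun W W' h ↦ ?_, fun A ↦ ?_⟩
  · exact Subtype.ext (IsUnitriangularFor.conj_injOn c W.2 W'.2 (congrArg Subtype.val h))
  · obtain ⟨W, hW, h⟩ := exists_isUnitriangularFor_conj_eq hc A.2.1 A.2.2.1 A.2.2.2
    exact ⟨⟨W, hW⟩, Subtype.ext h⟩

end Matrix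

/-- Counting `(k+1)`-potent upper triangular `n×n` matrices with diagonal entries in
`D = {0, 1, ω, …, ω^(k-1)}` over a finite field `K` with `q` elements: their number is
`∑_{n₀+⋯+n_k = n} (n! / (n₀!⋯n_k!)) · q^(∑_{i<j} n_i n_j)`. -/
theorem stmt_9 {K : Type*} [Field K] [Fintype K] [DecidableEq K] (q k n : ℕ)
    (hq : Fintype.card K = q) (hk : 1 ≤ k)
    (hchar_k : (k : K) ≠ 0) (hchar_k1 : ((k + 1 : ℕ) : K) ≠ 0)
    (ω : K) (hω : ω ^ k = 1)
    (hdist : (insert (0 : K) ((Finset.range k).image (fun m => ω ^ m))).card = k + 1) :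
    Nat.card {A : Matrix (Fin n) (Fin n) K //
        A ^ (k + 1) = A ∧ (∀ i j : Fin n, j < i → A i j = 0) ∧
        ∀ i : Fin n, A i i ∈ insert (0 : K) ((Finset.range k).image (fun m => ω ^ m))}
      = ∑ v ∈ Finset.Nat.antidiagonalTuple (k + 1) n,
          Nat.multinomial Finset.univ v *
            q ^ (∑ i : Fin (k + 1), ∑ j ∈ Finset.Ioi i, v i * v j) := by
  subst hq
  set s := insert (0 : K) ((Finset.range k).image (fun m => ω ^ m)) with hs
  have hpow : ∀ d ∈ s, d ^ (k + 1) = d := by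
    intro d hd
    obtain rfl | ⟨m, -, rfl⟩ : d = 0 ∨ ∃ m < k, ω ^ m = d := by simpa [hs] using hd
    · simp
    · rw [pow_succ, ← pow_mul, mul_comm m, pow_mul, hω, one_pow, one_mul]
  have hnodal := nodal_eq_X_pow_sub_X hk hdist hpow
  let e : Fin (k + 1) ≃ s := (s.equivFinOfCardEq hdist).symm
  let E : {A : Matrix (Fin n) (Fin n) K //
        A ^ (k + 1) = A ∧ (∀ i j : Fin n, j < i → A i j = 0) ∧ ∀ i : Fin n, A i i ∈ s} ≃
      Σ f : Fin n → Fin (k + 1), {A : Matrix (Fin n) (Fin n) K //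
        aeval A (Lagrange.nodal s id) = 0 ∧ A.IsUpperTriangular ∧ ∀ i, A i i = e (f i)} :=
    { toFun A := ⟨fun i ↦ e.symm ⟨A.1 i i, A.2.2.2 i⟩, A.1, by
        simp [hnodal, A.2.1], fun i j ↦ A.2.2.1 i j, by simp⟩
      invFun x := ⟨x.2.1, by simpa [hnodal, sub_eq_zero] using x.2.2.1,
        fun i j hij ↦ x.2.2.2.1 hij, fun i ↦ by simp [x.2.2.2.2 i]⟩
      left_inv A := rfl
      right_inv := by
        rintro ⟨f, A, h⟩
        refine Sigma.subtype_ext (funext fun i ↦ ?_) rfl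
        simp [h.2.2 i] }
  rw [Nat.card_congr E, Nat.card_sigma, ← piAntidiag_univ_fin_eq_antidiagonalTuple,
    ← sum_comp_fiberCard n (fun v : Fin (k + 1) → ℕ ↦
      Fintype.card K ^ (∑ i : Fin (k + 1), ∑ j ∈ Finset.Ioi i, v i * v j))]
  refine sum_congr rfl fun f _ ↦ ?_
  rw [Matrix.card_isUpperTriangular_aeval_nodal_eq_zero (c := fun i ↦ (e (f i) : K))
    fun i ↦ (e (f i)).2]
  simp only [ne_eq, Subtype.coe_inj, e.apply_eq_iff_eq]
  rw [← card_map_lt_eq_sum_fiberCard, ← card_lt_and_ne_eq_card_map_lt]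
end

section
/- Let K be a finite field with q elements whose characteristic divides neither k nor k+1, where k ≥ 1 is a natural number, and let s be the number of elements x ∈ K satisfying x^(k+1) = x. Then for every n, the total number of n×n upper triangular matrices A over K with A^(k+1) = A equals Σ_{(n₁,…,n_s)} (n! / (n₁!⋯n_s!)) · q^(Σ_{1 ≤ i < j ≤ s} n_i·n_j), where the sum ranges over all tuples of natural numbers (n₁, …, n_s) with n₁ + ⋯ + n_s = n. -/
open Polynomial

/-- The number of times each value is taken by `w`. -/
abbrev fiberCard {n s : ℕ} (w : Fin n → Fin s) (a : Fin s) : ℕ :=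
  (Finset.univ.filter fun i => w i = a).card

theorem card_filter_fiberCard_eq_multinomial_s10 {s n : ℕ} (v : Fin s → ℕ)
    (hv : v ∈ Finset.Nat.antidiagonalTuple s n) :
    (Finset.univ.filter fun w : Fin n → Fin s => fiberCard w = v).card =
      Nat.multinomial Finset.univ v := by
  have hw : (∑ a : Fin s, (MvPolynomial.X a : MvPolynomial (Fin s) ℕ)) ^ n =
      ∑ w : Fin n → Fin s, ∏ a, MvPolynomial.X a ^ fiberCard w a := by
    rw [Fintype.sum_pow]
    refine Finset.sum_congr rfl fun w _ => ?_
    rw [← Finset.prod_fiberwise Finset.univ w]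
    refine Finset.prod_congr rfl fun a _ => ?_
    rw [Finset.prod_congr rfl fun i hi => by rw [(Finset.mem_filter.1 hi).2], Finset.prod_const]
  have hX (u : Fin s → ℕ) : MvPolynomial.coeff (Finsupp.equivFunOnFinite.symm v)
      (∏ a, (MvPolynomial.X a : MvPolynomial (Fin s) ℕ) ^ u a) = if u = v then 1 else 0 := by
    have : (∏ a, (MvPolynomial.X a : MvPolynomial (Fin s) ℕ) ^ u a) =
        MvPolynomial.monomial (Finsupp.equivFunOnFinite.symm u) 1 := by
      rw [MvPolynomial.monomial_eq, Finsupp.prod_fintype _ _ (by simp)]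
      simp
    rw [this, MvPolynomial.coeff_monomial]
    simp
  have h := congrArg (MvPolynomial.coeff (Finsupp.equivFunOnFinite.symm v)) hw
  rw [Finset.sum_pow_eq_sum_piAntidiag, Finset.piAntidiag_univ_fin_eq_antidiagonalTuple,
    MvPolynomial.coeff_sum, MvPolynomial.coeff_sum] at h
  simp only [hX, ← map_natCast (MvPolynomial.C (σ := Fin s) (R := ℕ)),
    MvPolynomial.coeff_C_mul] at h
  simpa [hv] using h.symm

theorem two_mul_sum_Ioi_mul_add_sum_sq {s : ℕ} (v : Fin s → ℕ) :
    2 * (∑ i : Fin s, ∑ j ∈ Finset.Ioi i, v i * v j) + ∑ i, v i ^ 2 = (∑ i, v i) ^ 2 := by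
  induction s with
  | zero => simp
  | succ s ih =>
    have := ih (fun i => v i.succ)
    simp only [Fin.sum_univ_succ, Fin.Ioi_zero_eq_map, Fin.Ioi_succ, Finset.sum_map,
      Fin.coe_succEmb, ← Finset.mul_sum] at this ⊢
    linarith

theorem sum_Ioi_mul_add_single {s : ℕ} (v : Fin s → ℕ) (a : Fin s) :
    (∑ i : Fin s, ∑ j ∈ Finset.Ioi i,
      (v + Pi.single a 1 : Fin s → ℕ) i * (v + Pi.single a 1 : Fin s → ℕ) j) + v a =
      (∑ i : Fin s, ∑ j ∈ Finset.Ioi i, v i * v j) + ∑ i, v i := by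
  have h₁ := two_mul_sum_Ioi_mul_add_sum_sq v
  have h₂ := two_mul_sum_Ioi_mul_add_sum_sq (v + Pi.single a 1)
  have h₃ : ∑ i, (v + Pi.single a 1 : Fin s → ℕ) i = ∑ i, v i + 1 := by
    simp [Finset.sum_add_distrib]
  have h₄ : ∑ i, (v + Pi.single a 1 : Fin s → ℕ) i ^ 2 = ∑ i, v i ^ 2 + 2 * v a + 1 := by
    simp [add_sq, Finset.sum_add_distrib, Pi.single_apply]
  rw [h₃, h₄] at h₂
  linarith

theorem X_pow_succ_sub_X_separable {K : Type*} [Field K] {k : ℕ} (hk : (k : K) ≠ 0) :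
    (X ^ (k + 1) - X : K[X]).Separable := by
  obtain _ | m := k
  · simp at hk
  have hC : (C ((m + 1 : ℕ) : K)⁻¹ : K[X]) * ((m : K[X]) + 1) = 1 := by
    rw [← Nat.cast_succ, ← C_eq_natCast, ← C_mul, inv_mul_cancel₀ hk, C_1]
  rw [separable_def']
  refine ⟨- C ((m + 1 : ℕ) : K)⁻¹ * ((m : K[X]) + 2) ^ 2 * X ^ m,
    C ((m + 1 : ℕ) : K)⁻¹ * ((m : K[X]) + 2) * X ^ (m + 1) - 1, ?_⟩
  have hd : derivative (X ^ (m + 1 + 1) - X : K[X]) = ((m : K[X]) + 2) * X ^ (m + 1) - 1 := by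
    simp only [derivative_sub, derivative_X_pow, derivative_X, C_eq_natCast]
    push_cast
    ring
  rw [hd]
  generalize (C ((m + 1 : ℕ) : K)⁻¹ : K[X]) = c at *
  linear_combination ((m + 2 : K[X]) * X ^ (m + 1)) * hC

theorem pow_apply_self_of_isUpperTriangular {K : Type*} [Field K] {n : ℕ}
    {A : Matrix (Fin n) (Fin n) K} (hA : A.IsUpperTriangular) (m : ℕ) (i : Fin n) :
    (A ^ m) i i = A i i ^ m := by
  induction m with
  | zero => simp
  | succ m ih =>
    rw [pow_succ, pow_succ, ← ih, Matrix.mul_apply, Finset.sum_eq_single i _ (by simp)]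
    intro j _ hj
    rcases lt_or_gt_of_ne hj with h | h
    · rw [hA.pow m h, zero_mul]
    · rw [hA h, mul_zero]

theorem rootMultiplicity_charpoly_of_isUpperTriangular {K : Type*} [Field K] [DecidableEq K] {n : ℕ}
    {A : Matrix (Fin n) (Fin n) K} (hA : A.IsUpperTriangular) (d : K) :
    A.charpoly.rootMultiplicity d = (Finset.univ.filter fun i => A i i = d).card := by
  rw [Matrix.charpoly_of_isUpperTriangular _ hA, ← count_roots,
    roots_prod _ _ (Finset.prod_ne_zero_iff.2 fun i _ => X_sub_C_ne_zero _)]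
  simp only [roots_X_sub_C, Multiset.count_bind, Multiset.count_singleton, Finset.card_filter,
    eq_comm (a := d)]
  rfl

theorem finrank_ker_aeval_add_card_diag_eq {K : Type*} [Field K] [DecidableEq K] {n : ℕ}
    {A : Matrix (Fin n) (Fin n) K} (hA : A.IsUpperTriangular) {d : K} {p : K[X]}
    (hsep : ((X - C d) * p).Separable) (hp : aeval A ((X - C d) * p) = 0) :
    Module.finrank K (LinearMap.ker (aeval A p).vecMulLinear) +
      (Finset.univ.filter fun i => A i i = d).card = n := by
  set φ : Module.End K (Fin n → K) := Matrix.toLinAlgEquiv' A.transpose with hφ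
  have haeval (r : K[X]) : aeval φ r = Matrix.toLinAlgEquiv' (aeval A r).transpose := by
    simp [hφ, aeval_eq_sum_range, Matrix.transpose_sum, Matrix.transpose_pow]
  have hker : LinearMap.ker (aeval A p).vecMulLinear = LinearMap.ker (aeval φ p) := by
    ext b
    simp [haeval, Matrix.mulVec_transpose]
  have hzero : aeval φ ((X - C d) * p) = 0 := by
    rw [haeval, hp]; simp
  have hcop : IsCoprime (X - C d) p := hsep.isCoprime
  have hss : φ.IsFinitelySemisimple :=
    (Module.End.isSemisimple_of_squarefree_aeval_eq_zero hsep.squarefree hzero).isFinitelySemisimple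
  have heig : Module.finrank K (LinearMap.ker (aeval φ (X - C d))) =
      (Finset.univ.filter fun i => A i i = d).card := by
    rw [← rootMultiplicity_charpoly_of_isUpperTriangular hA, ← Matrix.charpoly_transpose,
      ← Matrix.charpoly_toLin']
    have := LinearMap.finrank_maxGenEigenspace_eq φ d
    rw [hss.maxGenEigenspace_eq_eigenspace, Module.End.eigenspace_def] at this
    rw [aeval_sub, aeval_X, aeval_C, Algebra.algebraMap_eq_smul_one]
    exact this
  have hsup := sup_ker_aeval_eq_ker_aeval_mul_of_coprime φ hcop
  have hinf := disjoint_ker_aeval_of_isCoprime φ hcop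
  have := Submodule.finrank_sup_add_finrank_inf_eq (LinearMap.ker (aeval φ (X - C d)))
    (LinearMap.ker (aeval φ p))
  rw [hsup, hzero, hinf.eq_bot, LinearMap.ker_zero, finrank_top, finrank_bot,
    Module.finrank_fin_fun, heig] at this
  rw [hker]
  omega

/-- The block matrix with scalar corner `d`, first row `b` and lower right block `A`. -/
def upperBlock {K : Type*} [Field K] {n : ℕ} (d : K) (b : Fin n → K)
    (A : Matrix (Fin n) (Fin n) K) : Matrix (Fin (n + 1)) (Fin (n + 1)) K :=
  Matrix.of (Matrix.vecCons (Matrix.vecCons d b) fun i => Matrix.vecCons 0 (A i))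

section upperBlock

variable {K : Type*} [Field K] {n : ℕ}

@[simp]
theorem upperBlock_zero_zero (d : K) (b : Fin n → K) (A : Matrix (Fin n) (Fin n) K) :
    upperBlock d b A 0 0 = d := rfl

@[simp]
theorem upperBlock_zero_succ (d : K) (b : Fin n → K) (A : Matrix (Fin n) (Fin n) K) (j : Fin n) :
    upperBlock d b A 0 j.succ = b j := rfl

@[simp]
theorem upperBlock_succ_zero (d : K) (b : Fin n → K) (A : Matrix (Fin n) (Fin n) K) (i : Fin n) :
    upperBlock d b A i.succ 0 = 0 := rfl

@[simp]
theorem upperBlock_succ_succ (d : K) (b : Fin n → K) (A : Matrix (Fin n) (Fin n) K)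
    (i j : Fin n) : upperBlock d b A i.succ j.succ = A i j := rfl

theorem upperBlock_mul (d d' : K) (b b' : Fin n → K) (A A' : Matrix (Fin n) (Fin n) K) :
    upperBlock d b A * upperBlock d' b' A' =
      upperBlock (d * d') (d • b' + Matrix.vecMul b A') (A * A') := by
  ext i j
  cases i using Fin.cases <;> cases j using Fin.cases <;>
    simp [Matrix.mul_apply, Fin.sum_univ_succ, Matrix.vecMul, dotProduct]

theorem upperBlock_one : upperBlock (1 : K) (0 : Fin n → K) 1 = 1 := by
  ext i j
  cases i using Fin.cases <;> cases j using Fin.cases <;>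
    simp [Matrix.one_apply, Fin.succ_ne_zero, (Fin.succ_ne_zero _).symm]

theorem upperBlock_inj {d d' : K} {b b' : Fin n → K} {A A' : Matrix (Fin n) (Fin n) K} :
    upperBlock d b A = upperBlock d' b' A' ↔ d = d' ∧ b = b' ∧ A = A' := by
  refine ⟨fun h => ⟨congrFun₂ h 0 0, funext fun j => congrFun₂ h 0 j.succ, ?_⟩, ?_⟩
  · ext i j
    exact congrFun₂ h i.succ j.succ
  · rintro ⟨rfl, rfl, rfl⟩
    rfl

theorem upperBlock_pow (d : K) (b : Fin n → K) (A : Matrix (Fin n) (Fin n) K) (m : ℕ) :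
    upperBlock d b A ^ m = upperBlock (d ^ m)
      (Matrix.vecMul b (aeval A (∑ i ∈ Finset.range m, C d ^ i * X ^ (m - 1 - i)))) (A ^ m) := by
  induction m with
  | zero => simp [upperBlock_one]
  | succ m ih =>
    rw [pow_succ, ih, upperBlock_mul, upperBlock_inj]
    refine ⟨(pow_succ d m).symm, ?_, (pow_succ A m).symm⟩
    rw [Nat.add_sub_cancel, geom_sum₂_succ_eq, mul_comm X, map_add, map_mul, aeval_X,
      Matrix.vecMul_add, Matrix.vecMul_vecMul, ← C_pow, aeval_C, Algebra.algebraMap_eq_smul_one,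
      Matrix.vecMul_smul, Matrix.vecMul_one]

theorem upperBlock_isUpperTriangular_iff {d : K} {b : Fin n → K} {A : Matrix (Fin n) (Fin n) K} :
    (upperBlock d b A).IsUpperTriangular ↔ A.IsUpperTriangular := by
  refine ⟨fun h i j hij => h (Fin.succ_lt_succ_iff.2 hij), fun h i j hij => ?_⟩
  cases i using Fin.cases with
  | zero => exact absurd hij (Fin.not_lt_zero j)
  | succ i =>
    cases j using Fin.cases with
    | zero => rfl
    | succ j => exact h (Fin.succ_lt_succ_iff.1 hij)

theorem eq_upperBlock_of_isUpperTriangular {M : Matrix (Fin (n + 1)) (Fin (n + 1)) K}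
    (hM : M.IsUpperTriangular) :
    M = upperBlock (M 0 0) (fun j => M 0 j.succ) (M.submatrix Fin.succ Fin.succ) := by
  ext i j
  cases i using Fin.cases with
  | zero => cases j using Fin.cases <;> rfl
  | succ i =>
    cases j using Fin.cases with
    | zero => exact hM i.succ_pos
    | succ j => rfl

theorem upperBlock_pow_succ_eq_self_iff {d : K} {b : Fin n → K} {A : Matrix (Fin n) (Fin n) K}
    {k : ℕ} (hd : d ^ (k + 1) = d) :
    upperBlock d b A ^ (k + 1) = upperBlock d b A ↔ A ^ (k + 1) = A ∧
      Matrix.vecMul b (aeval A (∑ i ∈ Finset.range (k + 1), C d ^ i * X ^ (k - i) - 1)) = 0 := by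
  rw [upperBlock_pow, upperBlock_inj, map_sub, map_one, Matrix.vecMul_sub, Matrix.vecMul_one,
    sub_eq_zero, Nat.add_sub_cancel]
  tauto

end upperBlock

/-- The upper triangular matrices `A` with `A ^ (k + 1) = A` and diagonal `d`. -/
abbrev PotentTriangular {K : Type*} [Field K] {n : ℕ} (k : ℕ) (d : Fin n → K) : Type _ :=
  {A : Matrix (Fin n) (Fin n) K // (A ^ (k + 1) = A ∧ A.IsUpperTriangular) ∧ A.diag = d}

/-- Deleting the first row and column of an upper triangular potent matrix, remembering the
rest of the first row. -/
def potentTriangularConsEquiv {K : Type*} [Field K] {n : ℕ} (k : ℕ) (d : K) (e : Fin n → K)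
    (hd : d ^ (k + 1) = d) :
    PotentTriangular k (Fin.cons d e : Fin (n + 1) → K) ≃ Σ A : PotentTriangular k e,
      LinearMap.ker (aeval A.1
        (∑ i ∈ Finset.range (k + 1), C d ^ i * X ^ (k - i) - 1)).vecMulLinear where
  toFun M :=
    have hM : M.1 = upperBlock d (fun j => M.1 0 j.succ) (M.1.submatrix Fin.succ Fin.succ) := by
      have h := eq_upperBlock_of_isUpperTriangular M.2.1.2
      rwa [show M.1 0 0 = d from congrFun M.2.2 0] at h
    have hpow := (upperBlock_pow_succ_eq_self_iff hd).1 (hM ▸ M.2.1.1)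
    ⟨⟨M.1.submatrix Fin.succ Fin.succ,
      ⟨hpow.1, upperBlock_isUpperTriangular_iff.1 (hM ▸ M.2.1.2)⟩,
      funext fun i => congrFun M.2.2 i.succ⟩, ⟨fun j => M.1 0 j.succ, hpow.2⟩⟩
  invFun x := ⟨upperBlock d x.2.1 x.1.1,
    ⟨(upperBlock_pow_succ_eq_self_iff hd).2 ⟨x.1.2.1.1, x.2.2⟩,
      upperBlock_isUpperTriangular_iff.2 x.1.2.1.2⟩, by
      funext i
      cases i using Fin.cases with
      | zero => rfl
      | succ i => exact congrFun x.1.2.2 i⟩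
  left_inv M := Subtype.ext <| by
    have h := eq_upperBlock_of_isUpperTriangular M.2.1.2
    rw [show M.1 0 0 = d from congrFun M.2.2 0] at h
    exact h.symm
  right_inv x := rfl

theorem X_sub_C_mul_geom_sum₂_sub_one {K : Type*} [Field K] {k : ℕ} {d : K}
    (hd : d ^ (k + 1) = d) :
    (X - C d) * (∑ i ∈ Finset.range (k + 1), C d ^ i * X ^ (k - i) - 1) = X ^ (k + 1) - X := by
  have h := geom_sum₂_mul (C d) X (k + 1)
  rw [Nat.add_sub_cancel, ← C_pow, hd] at h
  linear_combination -h

theorem sum_fiberCard {n s : ℕ} (w : Fin n → Fin s) : ∑ a, fiberCard w a = n := by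
  simpa using (Finset.card_eq_sum_card_fiberwise (f := w) (s := Finset.univ) (t := Finset.univ)
    (by simp)).symm

theorem fiberCard_cons {n s : ℕ} (a : Fin s) (w : Fin n → Fin s) :
    fiberCard (Fin.cons a w : Fin (n + 1) → Fin s) = fiberCard w + Pi.single a 1 := by
  funext b
  simp only [fiberCard, Finset.card_filter, Fin.sum_univ_succ, Fin.cons_zero, Fin.cons_succ,
    Pi.add_apply, Pi.single_apply, eq_comm (a := a), add_comm]

theorem card_potentTriangular {K : Type*} [Field K] [Fintype K] [DecidableEq K] {k s : ℕ}
    (hk : (k : K) ≠ 0) (r : Fin s → K) (hr : Function.Injective r)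
    (hpow : ∀ a, r a ^ (k + 1) = r a) {n : ℕ} (w : Fin n → Fin s) :
    Nat.card (PotentTriangular k (r ∘ w)) =
      Fintype.card K ^ ∑ i, ∑ j ∈ Finset.Ioi i, fiberCard w i * fiberCard w j := by
  induction w using Fin.consInduction with
  | elim0 =>
    have : Unique (PotentTriangular k (r ∘ (Fin.elim0 : Fin 0 → Fin s))) :=
      { default := ⟨0, ⟨Subsingleton.elim _ _, fun i => i.elim0⟩, Subsingleton.elim _ _⟩
        uniq := fun _ => Subsingleton.elim _ _ }
    simp [fiberCard]
  | @cons n a w ih =>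
    have hcons : r ∘ (Fin.cons a w : Fin (n + 1) → Fin s) = Fin.cons (r a) (r ∘ w) :=
      Fin.comp_cons r a w
    rw [hcons, Nat.card_congr (potentTriangularConsEquiv k (r a) (r ∘ w) (hpow a)),
      Nat.card_sigma]
    have hfiber (A : PotentTriangular k (r ∘ w)) :
        Nat.card (LinearMap.ker (aeval A.1
          (∑ i ∈ Finset.range (k + 1), C (r a) ^ i * X ^ (k - i) - 1)).vecMulLinear) =
        Fintype.card K ^ (n - fiberCard w a) := by
      have hmul := X_sub_C_mul_geom_sum₂_sub_one (hpow a)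
      have h := finrank_ker_aeval_add_card_diag_eq (d := r a) A.2.1.2
        (hmul ▸ X_pow_succ_sub_X_separable hk) (by rw [hmul]; simp [A.2.1.1])
      have hdiag (i : Fin n) : A.1 i i = r (w i) := congrFun A.2.2 i
      simp only [hdiag, hr.eq_iff] at h
      rw [Module.natCard_eq_pow_finrank (K := K), Nat.card_eq_fintype_card]
      congr 1
      exact Nat.eq_sub_of_add_eq h
    have hexp := sum_Ioi_mul_add_single (fiberCard w) a
    have hle : fiberCard w a ≤ n := (Finset.card_filter_le _ _).trans (by simp)
    rw [sum_fiberCard] at hexp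
    simp only [hfiber]
    rw [Finset.sum_const, Finset.card_univ, ← Nat.card_eq_fintype_card, ih, smul_eq_mul, ← pow_add,
      fiberCard_cons]
    congr 1
    omega

/-- Counting all `(k+1)`-potent upper triangular `n×n` matrices over a finite field `K`
with `q` elements, where `s` is the number of solutions of `x^(k+1) = x` in `K`:
their number is `∑_{n₁+⋯+n_s = n} (n! / (n₁!⋯n_s!)) · q^(∑_{i<j} n_i n_j)`. -/
theorem stmt_10 {K : Type*} [Field K] [Fintype K] [DecidableEq K] (q k n s : ℕ)
    (hq : Fintype.card K = q) (hk : 1 ≤ k)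
    (hchar_k : (k : K) ≠ 0) (hchar_k1 : ((k + 1 : ℕ) : K) ≠ 0)
    (hs : (Finset.univ.filter (fun x : K => x ^ (k + 1) = x)).card = s) :
    Nat.card {A : Matrix (Fin n) (Fin n) K //
        A ^ (k + 1) = A ∧ ∀ i j : Fin n, j < i → A i j = 0}
      = ∑ v ∈ Finset.Nat.antidiagonalTuple s n,
          Nat.multinomial Finset.univ v *
            q ^ (∑ i : Fin s, ∑ j ∈ Finset.Ioi i, v i * v j) := by
  subst hq
  let r := (Finset.equivFinOfCardEq hs).symm
  have hpow (a : Fin s) : (r a : K) ^ (k + 1) = r a := (Finset.mem_filter.1 (r a).2).2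
  have hdiag {A : Matrix (Fin n) (Fin n) K} (hA : A ^ (k + 1) = A) (hT : A.IsUpperTriangular)
      (i : Fin n) : A i i ^ (k + 1) = A i i := by
    rw [← pow_apply_self_of_isUpperTriangular hT, hA]
  let E : {A : Matrix (Fin n) (Fin n) K // A ^ (k + 1) = A ∧ ∀ i j : Fin n, j < i → A i j = 0} ≃
      Σ w : Fin n → Fin s, PotentTriangular k ((fun a => (r a : K)) ∘ w) :=
    { toFun := fun A => ⟨fun i => r.symm ⟨A.1 i i, by simpa using hdiag A.2.1 A.2.2 i⟩,
        A.1, ⟨A.2.1, A.2.2⟩, by funext i; simp⟩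
      invFun := fun x => ⟨x.2.1, x.2.2.1.1, x.2.2.1.2⟩
      left_inv := fun A => rfl
      right_inv := by
        rintro ⟨w, A, hA, hd⟩
        obtain rfl : w = fun i => r.symm ⟨A i i, by simpa using hdiag hA.1 hA.2 i⟩ := by
          funext i
          rw [Equiv.eq_symm_apply]
          exact Subtype.ext (congrFun hd i).symm
        rfl }
  rw [Nat.card_congr E, Nat.card_sigma]
  rw [Finset.sum_congr rfl fun w _ => card_potentTriangular hchar_k (fun a => (r a : K))
    (Subtype.val_injective.comp r.injective) hpow w]
  rw [← Finset.sum_fiberwise_of_maps_to (t := Finset.Nat.antidiagonalTuple s n) (g := fiberCard)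
    fun w _ => Finset.Nat.mem_antidiagonalTuple.2 (sum_fiberCard w)]
  refine Finset.sum_congr rfl fun v hv => ?_
  rw [← card_filter_fiberCard_eq_multinomial_s10 v hv, Finset.sum_congr rfl fun w hw => by
    rw [(Finset.mem_filter.1 hw).2], Finset.sum_const, smul_eq_mul]
end

section
/- Let h ≥ 1 be a natural number and let K be a finite field with q elements whose characteristic does not divide h. Let l be the number of elements d ∈ K with d^h = 1. Then for every n ≥ 1, the number of n×n upper triangular matrices g over K satisfying g^h = 1 (the identity matrix) equals Σ_{(n₁,…,n_l)} (n! / (n₁!⋯n_l!)) · q^(Σ_{1 ≤ i < j ≤ l} n_i·n_j), where the sum ranges over all tuples of natural numbers (n₁, …, n_l) with n₁ + ⋯ + n_l = n. -/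
open Finset Polynomial

/-- The multinomial coefficient counts the functions with prescribed fibre sizes. -/
theorem card_filter_fiber_card_eq_multinomial {ι : Type*} [Fintype ι] [DecidableEq ι] {n : ℕ}
    {v : ι → ℕ} (hv : ∑ x, v x = n) :
    #{d : Fin n → ι | (fun x => #{i | d i = x}) = v} = Nat.multinomial univ v := by
  have hmon (w : ι → ℕ) : ∏ x, (MvPolynomial.X x : MvPolynomial ι ℕ) ^ w x =
      MvPolynomial.monomial (Finsupp.equivFunOnFinite.symm w) 1 := by
    rw [MvPolynomial.monomial_eq, Finsupp.prod_fintype _ _ (by simp)]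
    simp
  have hfib (d : Fin n → ι) : ∏ i, (MvPolynomial.X (d i) : MvPolynomial ι ℕ) =
      MvPolynomial.monomial (Finsupp.equivFunOnFinite.symm fun x => #{i | d i = x}) 1 := by
    rw [← hmon, ← Finset.prod_fiberwise univ d]
    refine prod_congr rfl fun x _ => ?_
    rw [prod_congr rfl (g := fun _ => MvPolynomial.X x) (by simp +contextual), prod_const]
  have key := congrArg (MvPolynomial.coeff (Finsupp.equivFunOnFinite.symm v))
    ((Fintype.sum_pow (fun x : ι => (MvPolynomial.X x : MvPolynomial ι ℕ)) n).symm.trans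
      (sum_pow_eq_sum_piAntidiag univ _ n))
  simp only [hfib, hmon, MvPolynomial.coeff_sum, MvPolynomial.coeff_monomial,
    EmbeddingLike.apply_eq_iff_eq, ← nsmul_eq_mul, MvPolynomial.coeff_smul] at key
  simpa [hv] using key

/-- Summing a function of the fibre sizes of `d : Fin n → ι` over all `d`. -/
theorem sum_fiber_card {ι : Type*} [Fintype ι] [DecidableEq ι] (n : ℕ)
    (F : (ι → ℕ) → ℕ) :
    ∑ d : Fin n → ι, F (fun x => #{i | d i = x}) =
      ∑ v ∈ piAntidiag univ n, Nat.multinomial univ v * F v := by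
  rw [← sum_fiberwise_of_maps_to (t := piAntidiag univ n)
    (g := fun (d : Fin n → ι) x => #{i | d i = x})]
  · refine sum_congr rfl fun v hv => ?_
    rw [← card_filter_fiber_card_eq_multinomial (mem_piAntidiag.1 hv).1, ← smul_eq_mul,
      ← sum_const]
    exact sum_congr rfl fun d hd => by rw [(mem_filter.1 hd).2]
  · intro d _
    simp [← card_eq_sum_card_fiberwise]

/-- The products of pairs of fibre sizes count the pairs of points with increasing values. -/
theorem sum_Ioi_fiber_card_mul {ι : Type*} [Fintype ι] [LinearOrder ι] [LocallyFiniteOrderTop ι]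
    {n : ℕ} (d : Fin n → ι) :
    ∑ x, ∑ y ∈ Ioi x, #{i | d i = x} * #{i | d i = y} =
      ∑ i, ∑ j, if d i < d j then 1 else 0 := by
  simp only [card_filter, sum_mul_sum]
  simp_rw [sum_comm (s := Ioi _)]
  rw [sum_comm]
  refine sum_congr rfl fun i _ => ?_
  rw [sum_comm]
  refine sum_congr rfl fun j _ => ?_
  rw [sum_eq_single (d i)] <;> simp +contextual [eq_comm]

/-- Splitting off the last point from the count of pairs with increasing values. -/
theorem sum_ite_lt_castSucc {ι : Type*} [LinearOrder ι] {n : ℕ} (d : Fin (n + 1) → ι) :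
    (∑ i, ∑ j, if d i < d j then 1 else 0) =
      (∑ i : Fin n, ∑ j : Fin n, if d i.castSucc < d j.castSucc then 1 else 0) +
        #{i : Fin n | d i.castSucc ≠ d (Fin.last n)} := by
  simp only [Fin.sum_univ_castSucc, card_filter, sum_add_distrib, lt_irrefl, if_false, add_zero,
    add_assoc]
  rw [← sum_add_distrib]
  congr 1
  refine sum_congr rfl fun i _ => ?_
  rcases lt_trichotomy (d i.castSucc) (d (Fin.last n)) with h | h | h
  · simp [h, h.ne, h.not_gt]
  · simp [h]
  · simp [h, h.ne', h.not_gt]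

/-- If `A` is upper triangular with `A ^ h = 1` and `a ^ h = 1`, the kernel of
`(X ^ h - 1) / (X - a)` evaluated at `A` is the range of `A - a`, whose dimension is the number of
diagonal entries of `A` different from `a`. -/
theorem card_ker_geom_sum {K : Type*} [Field K] [Fintype K] [DecidableEq K] {n h : ℕ}
    (hchar : (h : K) ≠ 0) {A : Matrix (Fin n) (Fin n) K} (hA : A ^ h = 1)
    (htri : ∀ i j, j < i → A i j = 0) {a : K} (ha : a ^ h = 1) :
    Nat.card {c : Fin n → K //
        (aeval A (∑ i ∈ range h, X ^ i * C a ^ (h - 1 - i))).mulVec c = 0} =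
      Fintype.card K ^ #{i | A i i ≠ a} := by
  set f : Module.End K (Fin n → K) := Matrix.toLinAlgEquiv' A with hf
  have hfh : f ^ h = 1 := by rw [hf, ← map_pow, hA, map_one]
  have hss : f.IsSemisimple := by
    refine Module.End.isSemisimple_of_squarefree_aeval_eq_zero
      (separable_X_pow_sub_C (1 : K) hchar one_ne_zero).squarefree ?_
    simp [hfh]
  have heig : Module.finrank K (f.eigenspace a) = #{i | A i i = a} := by
    rw [← hss.isFinitelySemisimple.maxGenEigenspace_eq_eigenspace,
      LinearMap.finrank_maxGenEigenspace_eq, hf]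
    change (Matrix.toLin' A).charpoly.rootMultiplicity a = _
    rw [Matrix.charpoly_toLin',
      Matrix.charpoly_of_isUpperTriangular _ (fun i j hij => htri i j hij), ← count_roots,
      roots_prod _ _ (prod_ne_zero_iff.2 fun i _ => X_sub_C_ne_zero _)]
    simp only [roots_X_sub_C, Multiset.bind_singleton, Multiset.count_map, eq_comm (a := a)]
    rfl
  set p : K[X] := ∑ i ∈ range h, X ^ i * C a ^ (h - 1 - i) with hp
  have hpX : p * (X - C a) = X ^ h - 1 := by
    rw [hp, (Commute.all _ _).geom_sum₂_mul, ← C_pow, ha, C_1]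
  have hpa : p.eval a ≠ 0 := by
    have hd := congrArg (fun s => (derivative s).eval a) hpX
    have ha0 : a ≠ 0 := by
      rintro rfl
      exact hchar (by rcases h with _ | h <;> simp_all)
    have : p.eval a = h * a ^ (h - 1) := by simpa [derivative_X_pow] using hd
    rw [this]
    exact mul_ne_zero hchar (pow_ne_zero _ ha0)
  obtain ⟨r, hr⟩ := X_sub_C_dvd_sub_C_eval (a := a) (p := p)
  have hker : LinearMap.ker (aeval f p) = LinearMap.range (f - algebraMap K _ a) := by
    have hmul : aeval f p * (f - algebraMap K _ a) = 0 := by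
      simpa [hfh] using congrArg (aeval f) hpX
    have hdiv : aeval f p - algebraMap K _ (p.eval a) = (f - algebraMap K _ a) * aeval f r := by
      simpa using congrArg (aeval f) hr
    ext c
    constructor
    · intro hc
      refine ⟨-(p.eval a)⁻¹ • aeval f r c, ?_⟩
      have := LinearMap.congr_fun hdiv c
      simp only [LinearMap.sub_apply, LinearMap.mem_ker.1 hc, Module.End.mul_apply,
        Module.algebraMap_end_apply, zero_sub] at this
      rw [map_smul, LinearMap.sub_apply, Module.algebraMap_end_apply, ← this]
      simp [hpa]
    · rintro ⟨c, rfl⟩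
      exact LinearMap.congr_fun hmul c
  have hpf (c : Fin n → K) : (aeval A p).mulVec c = aeval f p c := by
    rw [hf, aeval_algHom_apply (Matrix.toLinAlgEquiv' : Matrix (Fin n) (Fin n) K ≃ₐ[K] _)]
    rfl
  have hcard : Nat.card {c : Fin n → K // (aeval A p).mulVec c = 0} =
      Nat.card (LinearMap.ker (aeval f p)) := by
    simp_rw [hpf]
    rfl
  rw [hcard, hker, Module.natCard_eq_pow_finrank (K := K), Nat.card_eq_fintype_card]
  congr 1
  have hrank := LinearMap.finrank_range_add_finrank_ker (f - algebraMap K _ a)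
  rw [Algebra.algebraMap_eq_smul_one, ← Module.End.eigenspace_def, heig,
    Module.finrank_fin_fun] at hrank
  have hsplit := card_filter_add_card_filter_not (s := (univ : Finset (Fin n))) (fun i => A i i = a)
  rw [card_univ, Fintype.card_fin] at hsplit
  rw [Algebra.algebraMap_eq_smul_one]
  simp only [ne_eq]
  omega

/-- The powers of a matrix whose last row vanishes off the diagonal, in block form. -/
theorem pow_block_castSucc_last {K : Type*} [Field K] {n : ℕ}
    {g : Matrix (Fin (n + 1)) (Fin (n + 1)) K} (hg : ∀ j : Fin n, g (Fin.last n) j.castSucc = 0)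
    (k : ℕ) :
    (g ^ k).submatrix Fin.castSucc Fin.castSucc = g.submatrix Fin.castSucc Fin.castSucc ^ k ∧
    (∀ j : Fin n, (g ^ k) (Fin.last n) j.castSucc = 0) ∧
    (g ^ k) (Fin.last n) (Fin.last n) = g (Fin.last n) (Fin.last n) ^ k ∧
    (fun i : Fin n => (g ^ k) i.castSucc (Fin.last n)) =
      (aeval (g.submatrix Fin.castSucc Fin.castSucc)
        (∑ i ∈ range k, X ^ i * C (g (Fin.last n) (Fin.last n)) ^ (k - 1 - i))).mulVec
          fun i => g i.castSucc (Fin.last n) := by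
  induction k with
  | zero =>
    refine ⟨?_, ?_, ?_, ?_⟩
    · ext i j; simp [Matrix.one_apply]
    · intro j; simp [(Fin.castSucc_lt_last j).ne']
    · simp
    · ext i; simp [(Fin.castSucc_lt_last i).ne]
  | succ k ih =>
    obtain ⟨hblock, hrow, hlast, hcol⟩ := ih
    refine ⟨?_, ?_, ?_, ?_⟩
    · ext i j
      rw [pow_succ (g.submatrix Fin.castSucc Fin.castSucc) k, ← hblock]
      simp [pow_succ, Matrix.mul_apply, Fin.sum_univ_castSucc, hg]
    · intro j
      simp [pow_succ, Matrix.mul_apply, Fin.sum_univ_castSucc, hg, hrow]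
    · simp [pow_succ, Matrix.mul_apply, Fin.sum_univ_castSucc, hrow, hlast]
    · have hsum :=
        (Commute.all (X : K[X]) (C (g (Fin.last n) (Fin.last n)))).geom_sum₂_succ_eq (n := k)
      rw [Nat.add_sub_cancel, hsum, map_add, map_mul, Matrix.add_mulVec, ← Matrix.mulVec_mulVec,
        ← hcol, map_pow, aeval_X, ← hblock]
      ext i
      simp [pow_succ, Matrix.mul_apply, Fin.sum_univ_castSucc, Matrix.mulVec, dotProduct,
        Matrix.algebraMap_matrix_apply, mul_comm]

/-- The equation `g ^ k = 1` in block form. -/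
theorem pow_eq_one_iff_block {K : Type*} [Field K] {n : ℕ}
    {g : Matrix (Fin (n + 1)) (Fin (n + 1)) K} (hg : ∀ j : Fin n, g (Fin.last n) j.castSucc = 0)
    (k : ℕ) :
    g ^ k = 1 ↔ g (Fin.last n) (Fin.last n) ^ k = 1 ∧
      g.submatrix Fin.castSucc Fin.castSucc ^ k = 1 ∧
      (aeval (g.submatrix Fin.castSucc Fin.castSucc)
        (∑ i ∈ range k, X ^ i * C (g (Fin.last n) (Fin.last n)) ^ (k - 1 - i))).mulVec
          (fun i => g i.castSucc (Fin.last n)) = 0 := by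
  obtain ⟨hblock, hrow, hlast, hcol⟩ := pow_block_castSucc_last hg k
  rw [← hblock, ← hlast, ← hcol]
  constructor
  · intro h
    rw [h]
    refine ⟨by simp, ?_, ?_⟩
    · ext i j; simp [Matrix.one_apply]
    · ext i; simp [(Fin.castSucc_lt_last i).ne]
  · rintro ⟨h₁, h₂, h₃⟩
    ext i j
    induction i using Fin.lastCases with
    | last =>
      induction j using Fin.lastCases with
      | last => simp [h₁]
      | cast j => simp [hrow, (Fin.castSucc_lt_last j).ne']
    | cast i =>
      induction j using Fin.lastCases with
      | last => simpa [Matrix.one_apply, (Fin.castSucc_lt_last i).ne] using congrFun h₃ i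
      | cast j => simpa [Matrix.one_apply] using congrFun (congrFun h₂ i) j

/-- The diagonal entries of an upper triangular root of `1` are roots of `1`. -/
theorem diag_pow_eq_one {K : Type*} [Field K] {n k : ℕ} {g : Matrix (Fin n) (Fin n) K}
    (htri : ∀ i j, j < i → g i j = 0) (hg : g ^ k = 1) (i : Fin n) : g i i ^ k = 1 := by
  induction n with
  | zero => exact i.elim0
  | succ n ih =>
    have hblock := (pow_eq_one_iff_block (fun j => htri _ _ (Fin.castSucc_lt_last j)) k).1 hg
    induction i using Fin.lastCases with
    | last => exact hblock.1
    | cast i =>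
      exact ih (fun i j hij => htri _ _ (Fin.castSucc_lt_castSucc_iff.2 hij)) hblock.2.1 i

/-- Upper triangular matrices with prescribed diagonal `d` satisfying `g ^ h = 1`. -/
abbrev TriangularRoot {K : Type*} [Field K] (h : ℕ) {n : ℕ} (d : Fin n → K) : Type _ :=
  {g : Matrix (Fin n) (Fin n) K // g ^ h = 1 ∧ (∀ i j, j < i → g i j = 0) ∧ ∀ i, g i i = d i}

/-- An upper triangular root of `1` is an upper triangular root of `1` of size one less together
with an admissible last column. -/
def triangularRootSuccEquiv {K : Type*} [Field K] {h n : ℕ} (d : Fin (n + 1) → K)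
    (hd : d (Fin.last n) ^ h = 1) :
    TriangularRoot h d ≃ Σ g : TriangularRoot h (fun i : Fin n => d i.castSucc),
      {c : Fin n → K //
        (aeval g.1 (∑ i ∈ range h, X ^ i * C (d (Fin.last n)) ^ (h - 1 - i))).mulVec c = 0} where
  toFun g :=
    have hg := (pow_eq_one_iff_block (fun j => g.2.2.1 _ _ (Fin.castSucc_lt_last j)) h).1 g.2.1
    ⟨⟨g.1.submatrix Fin.castSucc Fin.castSucc, hg.2.1,
      fun i j hij => g.2.2.1 _ _ (Fin.castSucc_lt_castSucc_iff.2 hij), fun i => g.2.2.2 _⟩,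
      fun i => g.1 i.castSucc (Fin.last n), by rw [← g.2.2.2]; exact hg.2.2⟩
  invFun x := ⟨Matrix.of fun i j => Fin.lastCases (motive := fun _ => K)
      (Fin.lastCases (motive := fun _ => K) (d (Fin.last n)) (fun _ => 0) j)
      (fun i => Fin.lastCases (motive := fun _ => K) (x.2.1 i) (x.1.1 i) j) i, by
    refine ⟨?_, ?_, ?_⟩
    · rw [pow_eq_one_iff_block (by simp)]
      refine ⟨by simpa using hd, ?_⟩
      simp only [Matrix.submatrix, Matrix.of_apply, Fin.lastCases_castSucc, Fin.lastCases_last]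
      exact ⟨x.1.2.1, x.2.2⟩
    · intro i j hij
      induction j using Fin.lastCases with
      | last => exact absurd hij (Fin.le_last i).not_gt
      | cast j =>
        induction i using Fin.lastCases with
        | last => simp
        | cast i => simpa using x.1.2.2.1 _ _ (Fin.castSucc_lt_castSucc_iff.1 hij)
    · intro i
      induction i using Fin.lastCases with
      | last => simp
      | cast i => simpa using x.1.2.2.2 i⟩
  left_inv g := by
    refine Subtype.ext ?_
    ext i j
    induction i using Fin.lastCases with
    | last =>
      induction j using Fin.lastCases with
      | last => simp [g.2.2.2]
      | cast j => simp [g.2.2.1 _ _ (Fin.castSucc_lt_last j)]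
    | cast i => induction j using Fin.lastCases <;> simp
  right_inv x := by
    refine Sigma.subtype_ext (Subtype.ext ?_) ?_
    · ext i j
      simp
    · ext i
      simp

/-- The number of upper triangular roots of `1` with a given diagonal. -/
theorem card_triangularRoot {K ι : Type*} [Field K] [Fintype K] [DecidableEq K] [LinearOrder ι]
    {h : ℕ} (hchar : (h : K) ≠ 0) {r : ι → K} (hr : Function.Injective r)
    (hroot : ∀ x, r x ^ h = 1) {n : ℕ} (d : Fin n → ι) :
    Nat.card (TriangularRoot h (fun i => r (d i))) =
      Fintype.card K ^ (∑ i, ∑ j, if d i < d j then 1 else 0) := by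
  induction n with
  | zero =>
    rw [Nat.card_eq_one_iff_unique.2 ⟨⟨fun a b => Subtype.ext (Subsingleton.elim _ _)⟩,
      ⟨⟨1, one_pow h, fun i => i.elim0, fun i => i.elim0⟩⟩⟩]
    simp
  | succ n ih =>
    have : Finite (TriangularRoot h (fun i : Fin n => r (d i.castSucc))) := Subtype.finite
    have := Fintype.ofFinite (TriangularRoot h (fun i : Fin n => r (d i.castSucc)))
    rw [Nat.card_congr (triangularRootSuccEquiv _ (hroot _)), Nat.card_sigma,
      sum_congr rfl (g := fun _ => Fintype.card K ^ #{i : Fin n | d i.castSucc ≠ d (Fin.last n)}),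
      sum_const, card_univ, ← Nat.card_eq_fintype_card, ih, smul_eq_mul, ← pow_add,
      sum_ite_lt_castSucc]
    intro g _
    rw [card_ker_geom_sum hchar g.2.1 g.2.2.1 (hroot _)]
    simp only [g.2.2.2, hr.ne_iff]

/-- Słowik's theorem: over a finite field `K` with `q` elements and `char K ∤ h`, if `l` is
the number of `h`-th roots of unity in `K`, then the number of `n×n` upper triangular
matrices `g` with `g^h = 1` equals
`∑_{n₁+⋯+n_l = n} (n! / (n₁!⋯n_l!)) · q^(∑_{i<j} n_i n_j)`. -/
theorem stmt_11 {K : Type*} [Field K] [Fintype K] [DecidableEq K] (q h n l : ℕ)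
    (hq : Fintype.card K = q) (hh : 1 ≤ h) (hchar : (h : K) ≠ 0) (hn : 1 ≤ n)
    (hl : (Finset.univ.filter (fun d : K => d ^ h = 1)).card = l) :
    Nat.card {g : Matrix (Fin n) (Fin n) K //
        g ^ h = 1 ∧ ∀ i j : Fin n, j < i → g i j = 0}
      = ∑ v ∈ Finset.Nat.antidiagonalTuple l n,
          Nat.multinomial Finset.univ v *
            q ^ (∑ i : Fin l, ∑ j ∈ Finset.Ioi i, v i * v j) := by
  let e := (Finset.equivFinOfCardEq hl).symm
  have hr : Function.Injective fun x => (e x : K) := Subtype.val_injective.comp e.injective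
  have hroot (x : Fin l) : (e x : K) ^ h = 1 := (mem_filter.1 (e x).2).2
  rw [← piAntidiag_univ_fin_eq_antidiagonalTuple,
    ← sum_fiber_card n (fun v => q ^ (∑ i : Fin l, ∑ j ∈ Finset.Ioi i, v i * v j))]
  simp_rw [sum_Ioi_fiber_card_mul, ← hq, ← card_triangularRoot hchar hr hroot]
  have (d : Fin n → Fin l) : Finite (TriangularRoot h fun i => (e (d i) : K)) := Subtype.finite
  rw [← Nat.card_sigma]
  refine (Nat.card_congr (Equiv.ofBijective (fun x => ⟨x.2.1, x.2.2.1, x.2.2.2.1⟩) ⟨?_, ?_⟩)).symm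
  · rintro ⟨d, g, hg⟩ ⟨d', g', hg'⟩ hgg
    obtain rfl : g = g' := congrArg Subtype.val hgg
    obtain rfl : d = d' := funext fun i => hr ((hg.2.2 i).symm.trans (hg'.2.2 i))
    rfl
  · rintro ⟨g, hg, htri⟩
    exact ⟨⟨fun i => e.symm ⟨g i i, by simp [diag_pow_eq_one htri hg]⟩, g, hg, htri, by simp⟩, rfl⟩
end

section
/- Let K be a finite field with q elements whose characteristic divides neither k nor k+1 (k ≥ 1), and let s be the number of elements x ∈ K with x^(k+1) = x. Let X be the star poset on the set {x₀, x₁, …, x_n, y₁, …, y_m} with relations: x₀ ≤ x_i for i = 1,…,n and x_i ≤ x_j for i ≤ j; x₀ ≤ y_i for i = 1,…,m and y_i ≤ y_j for i ≤ j; and no element x_i (i ≥ 1) is comparable with any y_j. Then the number of elements f of the incidence algebra I(X, K) satisfying f^(k+1) = f equals N(n+1) · P(m), where N(n+1) is the number of (n+1)×(n+1) upper triangular matrices A over K with A^(k+1) = A, and P(m) = Σ_{(m₁,…,m_s)} (m! / (m₁!⋯m_s!)) · q^(Σ_{1 ≤ i < j ≤ s} m_i·m_j) · q^(m₂ + m₃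 + ⋯ + m_s), the sum ranging over all tuples of natural numbers (m₁, …, m_s) with m₁ + ⋯ + m_s = m. -/
open Finset

/-- The number of pairs `x < y` on which a colouring `c` takes different values. -/
noncomputable def discordantPairs {Y S : Type*} [LT Y] (c : Y → S) : ℕ :=
  Nat.card {p : Y × Y // p.1 < p.2 ∧ c p.1 ≠ c p.2}

lemma discordantPairs_eq_sum {Y S : Type*} [LT Y] [Fintype Y] [DecidableLT Y] [DecidableEq S]
    (c : Y → S) :
    discordantPairs c = ∑ x, ∑ y, if x < y ∧ c x ≠ c y then 1 else 0 := by
  rw [discordantPairs, Nat.card_eq_fintype_card, Fintype.card_subtype, card_filter,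
    Fintype.sum_prod_type]

/-- The number of functions with prescribed fibre sizes is a multinomial coefficient. -/
lemma card_filter_card_fiber_eq {σ : Type*} [Fintype σ] [DecidableEq σ] {m : ℕ} (v : σ → ℕ)
    (hv : ∑ i, v i = m) :
    #{b : Fin m → σ | ∀ i, #{j | b j = i} = v i} = Nat.multinomial univ v := by
  classical
  have h : (∑ i : σ, (MvPolynomial.X i : MvPolynomial σ ℕ)) ^ m =
      ∑ b : Fin m → σ, ∏ j, MvPolynomial.X (b j) := by
    rw [← Fintype.prod_sum]; simp
  rw [sum_pow_eq_sum_piAntidiag] at h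
  have h' := congrArg (MvPolynomial.coeff (Finsupp.equivFunOnFinite.symm v)) h
  have hmon (w : σ → ℕ) : (∏ i, (MvPolynomial.X i : MvPolynomial σ ℕ) ^ w i)
      = MvPolynomial.monomial (Finsupp.equivFunOnFinite.symm w) 1 := by
    rw [MvPolynomial.monomial_eq]
    simp [Finsupp.prod_fintype]
  have hb (b : Fin m → σ) : (∏ j, (MvPolynomial.X (b j) : MvPolynomial σ ℕ))
      = ∏ i, (MvPolynomial.X i : MvPolynomial σ ℕ) ^ #{j | b j = i} := by
    rw [← prod_fiberwise univ b]
    refine prod_congr rfl fun i _ => ?_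
    rw [prod_congr rfl fun j hj => by rw [(mem_filter.1 hj).2], prod_const]
  simp only [hb, hmon, MvPolynomial.coeff_sum, MvPolynomial.coeff_monomial,
    ← map_natCast (MvPolynomial.C : ℕ →+* MvPolynomial σ ℕ), MvPolynomial.coeff_C_mul,
    EmbeddingLike.apply_eq_iff_eq] at h'
  simp only [mul_ite, mul_one, mul_zero, sum_ite_eq', sum_boole] at h'
  rw [if_pos (by simpa [mem_piAntidiag] using hv)] at h'
  simpa [funext_iff] using h'.symm

lemma discordantPairs_eq_sum_card_fiber {σ : Type*} [Fintype σ] [LinearOrder σ]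
    [LocallyFiniteOrderTop σ] {m : ℕ} (b : Fin m → σ) :
    discordantPairs b = ∑ i, ∑ j ∈ Ioi i, #{l | b l = i} * #{l | b l = j} := by
  have h1 : discordantPairs b = #{p : Fin m × Fin m | b p.1 < b p.2} := by
    rw [discordantPairs, Nat.card_eq_fintype_card, Fintype.card_subtype]
    refine card_nbij' (fun p => if b p.1 < b p.2 then p else p.swap)
      (fun p => if p.1 < p.2 then p else p.swap) ?_ ?_ ?_ ?_
    all_goals
      rintro ⟨p, r⟩ h
      simp only [mem_coe, mem_filter, mem_univ, true_and] at h ⊢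
    · split_ifs with h1
      · exact h1
      · exact lt_of_le_of_ne (not_lt.1 h1) h.2.symm
    · have : p ≠ r := by rintro rfl; exact lt_irrefl _ h
      split_ifs with h1
      · exact ⟨h1, h.ne⟩
      · exact ⟨lt_of_le_of_ne (not_lt.1 h1) this.symm, h.ne'⟩
    · split_ifs with h1 h2
      · rfl
      · exact absurd h.1 h2
      · exact absurd ‹_› (not_lt.2 h.1.le)
      · rfl
    · split_ifs with h1 h2
      · rfl
      · exact absurd ‹_› (not_lt.2 h.le)
      · rfl
  rw [h1, card_eq_sum_card_fiberwise (f := fun p => b p.1) (t := univ) (by simp)]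
  refine sum_congr rfl fun i _ => ?_
  rw [card_eq_sum_card_fiberwise (f := fun p => b p.2) (t := Ioi i)]
  · refine sum_congr rfl fun j hj => ?_
    rw [← card_product]
    congr 1
    ext p
    have := mem_Ioi.1 hj
    simp only [mem_filter, mem_univ, true_and, mem_product]
    constructor
    · rintro ⟨⟨_, h⟩, h'⟩; exact ⟨h, h'⟩
    · rintro ⟨h, h'⟩; exact ⟨⟨by rw [h, h']; exact this, h⟩, h'⟩
  · intro p hp
    simp only [mem_coe, mem_filter, mem_univ, true_and, mem_Ioi] at hp ⊢
    rw [← hp.2]; exact hp.1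

lemma sum_pow_discordantPairs_fin {s m q : ℕ} (z : Fin s) :
    ∑ b : Fin m → Fin s, q ^ (discordantPairs b + #{j | b j ≠ z})
      = ∑ v ∈ Finset.Nat.antidiagonalTuple s m,
            Nat.multinomial Finset.univ v *
              q ^ (∑ i : Fin s, ∑ j ∈ Finset.Ioi i, v i * v j) *
              q ^ (∑ j ∈ Finset.univ.filter (fun j : Fin s => j ≠ z), v j) := by
  rw [← sum_fiberwise_of_maps_to (t := Finset.Nat.antidiagonalTuple s m)
    (g := fun b i => #{j | b j = i})]
  · refine sum_congr rfl fun v hv => ?_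
    rw [Finset.Nat.mem_antidiagonalTuple] at hv
    have hcard : #{b : Fin m → Fin s | (fun i => #{j | b j = i}) = v}
        = Nat.multinomial univ v := by
      simp only [← card_filter_card_fiber_eq v hv, funext_iff]
      congr
    rw [← hcard, mul_assoc, ← pow_add, ← smul_eq_mul, ← sum_const]
    refine sum_congr rfl fun b hb => ?_
    have hb' := congrFun (mem_filter.1 hb).2
    rw [discordantPairs_eq_sum_card_fiber]
    simp only [hb']
    congr 2
    rw [card_eq_sum_card_fiberwise (f := b) (t := {j | j ≠ z})]
    · refine sum_congr rfl fun j hj => ?_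
      rw [← hb' j, filter_filter]
      congr 1
      ext l
      have := (mem_filter.1 hj).2
      simp only [mem_filter, mem_univ, true_and, and_iff_right_iff_imp]
      rintro rfl; exact this
    · intro l hl
      simpa using hl
  · intro b _
    rw [Finset.Nat.mem_antidiagonalTuple, ← card_eq_sum_card_fiberwise (by simp)]
    simp

lemma sum_pow_discordantPairs {S : Type*} [Fintype S] [DecidableEq S] {s m q : ℕ}
    (hs : Fintype.card S = s) (z : Fin s) (a : S) :
    ∑ b : Fin m → S, q ^ (discordantPairs b + #{j | b j ≠ a})
      = ∑ v ∈ Finset.Nat.antidiagonalTuple s m,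
            Nat.multinomial Finset.univ v *
              q ^ (∑ i : Fin s, ∑ j ∈ Finset.Ioi i, v i * v j) *
              q ^ (∑ j ∈ Finset.univ.filter (fun j : Fin s => j ≠ z), v j) := by
  rw [← sum_pow_discordantPairs_fin]
  let e₀ := Fintype.equivFinOfCardEq hs
  let e : S ≃ Fin s := e₀.trans (Equiv.swap (e₀ a) z)
  have he : e a = z := by simp [e]
  refine Fintype.sum_equiv (Equiv.arrowCongr (Equiv.refl _) e) _ _ fun b => ?_
  simp [discordantPairs, ← he]

lemma discordantPairs_star {X S : Type*} [Fintype X] [PartialOrder X] {n m : ℕ} [DecidableEq S]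
    (e : Fin (n + 1) ⊕ Fin m ≃ X)
    (hxx : ∀ i j, e (.inl i) ≤ e (.inl j) ↔ i ≤ j)
    (hyy : ∀ i j, e (.inr i) ≤ e (.inr j) ↔ i ≤ j)
    (hxy : ∀ i j, e (.inl i) ≤ e (.inr j) ↔ i = 0)
    (hyx : ∀ i j, ¬ e (.inr j) ≤ e (.inl i)) (c : X → S) :
    discordantPairs c = discordantPairs (fun i => c (e (.inl i))) +
      (discordantPairs (fun j => c (e (.inr j))) +
        #{j | c (e (.inr j)) ≠ c (e (.inl 0))}) := by
  classical
  have hmixed : (∑ i, ∑ j, if e (.inl i) < e (.inr j) ∧ c (e (.inl i)) ≠ c (e (.inr j))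
      then 1 else 0) = #{j | c (e (.inr j)) ≠ c (e (.inl 0))} := by
    rw [Fintype.sum_eq_single 0, card_filter]
    · refine sum_congr rfl fun j _ => ?_
      simp only [lt_iff_le_not_ge, hxy, hyx, not_false_eq_true, true_and, ne_comm]
    · intro i hi
      simp [lt_iff_le_not_ge, hxy, hi]
  have hdown (i j) : ¬ e (.inr j) < e (.inl i) := fun h => hyx i j h.le
  have hlx (i j) : e (.inl i) < e (.inl j) ↔ i < j := by simp only [lt_iff_le_not_ge, hxx]
  have hly (i j) : e (.inr i) < e (.inr j) ↔ i < j := by simp only [lt_iff_le_not_ge, hyy]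
  simp only [discordantPairs_eq_sum, ← e.sum_comp, Fintype.sum_sum_type, sum_add_distrib, hmixed,
    hdown, hlx, hly, false_and, if_false, sum_const_zero]
  ring

/-- Two `(k+1)`-potent elements are intertwined by the divided difference of `z ^ (k + 1) - z`. -/
lemma potent_mul_dividedDifference {R : Type*} [Ring R] {f d : R} {k : ℕ} (hf : f ^ (k + 1) = f)
    (hd : d ^ (k + 1) = d) :
    f * (∑ i ∈ range (k + 1), f ^ i * d ^ (k - i) - 1)
      = (∑ i ∈ range (k + 1), f ^ i * d ^ (k - i) - 1) * d := by
  have h1 : f * ∑ i ∈ range (k + 1), f ^ i * d ^ (k - i)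
      = ∑ i ∈ range k, f ^ (i + 1) * d ^ (k - i) + f := by
    rw [sum_range_succ, mul_add, mul_sum]
    simp [← mul_assoc, ← pow_succ', hf]
  have h2 : (∑ i ∈ range (k + 1), f ^ i * d ^ (k - i)) * d
      = ∑ i ∈ range k, f ^ (i + 1) * d ^ (k - i) + d := by
    rw [sum_range_succ', add_mul, sum_mul]
    simp only [pow_zero, one_mul, Nat.sub_zero, ← pow_succ, hd]
    congr 1
    refine sum_congr rfl fun i hi => ?_
    rw [mem_range] at hi
    rw [mul_assoc, ← pow_succ, show k - (i + 1) + 1 = k - i by omega]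
  rw [mul_sub, sub_mul, h1, h2]
  simp

namespace IncidenceAlgebra

variable {K X : Type*} [Field K] [PartialOrder X] [DecidableEq X]

/-- The diagonal element of the incidence algebra with prescribed diagonal entries. -/
def diag (c : X → K) : IncidenceAlgebra K X :=
  ⟨fun a b => if a = b then c a else 0, fun _ _ h => if_neg fun e => h e.le⟩

lemma diag_apply (c : X → K) (a b : X) : diag c a b = if a = b then c a else 0 := rfl

variable [LocallyFiniteOrder X]

instance instFiniteOfFinite [Finite K] [Finite X] : Finite (IncidenceAlgebra K X) :=
  Finite.of_injective (fun f : IncidenceAlgebra K X => (f : X → X → K)) DFunLike.coe_injective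

/-- Evaluation at `(x, x)` as a ring homomorphism. -/
def diagHom (x : X) : IncidenceAlgebra K X →+* K where
  toFun f := f x x
  map_one' := by simp
  map_mul' f g := by simp
  map_zero' := rfl
  map_add' _ _ := rfl

@[simp] lemma diagHom_apply (x : X) (f : IncidenceAlgebra K X) : diagHom x f = f x x := rfl

lemma apply_self_pow (f : IncidenceAlgebra K X) (x : X) (r : ℕ) : (f ^ r) x x = f x x ^ r :=
  map_pow (diagHom x) f r

lemma diag_mul_apply (c : X → K) (f : IncidenceAlgebra K X) (a b : X) :
    (diag c * f) a b = c a * f a b := by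
  by_cases h : a ≤ b
  · simp [diag_apply, ite_mul, h]
  · simp [apply_eq_zero_of_not_le h]

lemma mul_diag_apply (c : X → K) (f : IncidenceAlgebra K X) (a b : X) :
    (f * diag c) a b = f a b * c b := by
  by_cases h : a ≤ b
  · simp [diag_apply, mul_ite, h]
  · simp [apply_eq_zero_of_not_le h]

lemma diag_pow (c : X → K) (r : ℕ) : diag c ^ r = diag (c ^ r) := by
  induction r with
  | zero => ext a b; simp [diag_apply]
  | succ r ih =>
    ext a b
    rw [pow_succ, ih, mul_diag_apply, diag_apply, diag_apply]
    split_ifs with h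
    · simp [h, pow_succ]
    · simp

/-- The incidence algebra of a finite poset as a ring of matrices. -/
def toMatrix [Fintype X] : IncidenceAlgebra K X →+* Matrix X X K where
  toFun f := Matrix.of f
  map_one' := by ext a b; simp [Matrix.one_apply]
  map_mul' f g := by
    ext a b
    rw [Matrix.mul_apply, Matrix.of_apply, mul_apply]
    refine sum_subset (subset_univ _) fun t _ ht => ?_
    rw [mem_Icc, not_and_or] at ht
    rcases ht with h | h
    · rw [apply_eq_zero_of_not_le h, zero_mul]
    · rw [apply_eq_zero_of_not_le h g, mul_zero]
  map_zero' := rfl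
  map_add' _ _ := rfl

lemma toMatrix_injective [Fintype X] :
    Function.Injective (toMatrix : IncidenceAlgebra K X →+* Matrix X X K) :=
  fun _ _ h => DFunLike.coe_injective (Matrix.of.injective h)

lemma card_potent_eq_card_matrix [Fintype X] (r : ℕ) :
    Nat.card {f : IncidenceAlgebra K X // f ^ r = f} =
      Nat.card {A : Matrix X X K // A ^ r = A ∧ ∀ i j, ¬ i ≤ j → A i j = 0} := by
  refine Nat.card_congr (Equiv.ofBijective (fun f => ⟨toMatrix f.1,
    by rw [← map_pow, f.2], fun i j h => apply_eq_zero_of_not_le h f.1⟩) ⟨?_, ?_⟩)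
  · intro f g h
    exact Subtype.ext (toMatrix_injective (congrArg Subtype.val h))
  · rintro ⟨A, hA, hA'⟩
    have h : toMatrix (⟨A, hA'⟩ : IncidenceAlgebra K X) = A := rfl
    exact ⟨⟨⟨A, hA'⟩, toMatrix_injective (by rw [map_pow, h, hA])⟩, Subtype.ext h⟩

variable [Finite K] [Finite X]

lemma isUnit_iff_apply_self_ne_zero (f : IncidenceAlgebra K X) :
    IsUnit f ↔ ∀ x, f x x ≠ 0 := by
  refine ⟨fun h x => by simpa using (h.map (diagHom x)).ne_zero, fun h => ?_⟩
  refine IsLeftRegular.isUnit_of_finite (isLeftRegular_of_non_zero_divisor _ fun g hg => ?_)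
  have key : ∀ a b, g a b = 0 := fun a b => by
    induction a using (wellFounded_gt (α := X)).induction with
    | _ a ih =>
      by_cases hab : a ≤ b
      · have := congrFun (DFunLike.congr_fun hg a) b
        rw [mul_apply, sum_eq_single a] at this
        · simpa [h a] using this
        · intro t ht hta
          rw [ih t (lt_of_le_of_ne (mem_Icc.1 ht).1 hta.symm), mul_zero]
        · simp [hab]
      · exact apply_eq_zero_of_not_le hab g
  ext a b
  exact key a b

/-- Every potent element is conjugate to its diagonal part. -/
lemma exists_conj_diag {k : ℕ} (hk : (k : K) ≠ 0) {f : IncidenceAlgebra K X}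
    (hf : f ^ (k + 1) = f) :
    ∃ u : (IncidenceAlgebra K X)ˣ, f = u * diag (fun x => f x x) * ↑u⁻¹ := by
  have hc (x : X) : f x x ^ (k + 1) = f x x := by
    rw [← apply_self_pow, hf]
  have hd : diag (fun x => f x x) ^ (k + 1) = diag (fun x => f x x) := by
    rw [diag_pow]
    congr 1
    exact funext hc
  have hu : IsUnit (∑ i ∈ range (k + 1), f ^ i * diag (fun x => f x x) ^ (k - i) - 1) := by
    rw [isUnit_iff_apply_self_ne_zero]
    intro x
    rw [← diagHom_apply, map_sub, map_sum, map_one]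
    simp only [map_mul, map_pow, diagHom_apply, diag_apply, if_true]
    rw [sum_congr rfl fun i hi => pow_mul_pow_sub (f x x) (by rw [mem_range] at hi; omega)]
    rcases eq_or_ne (f x x) 0 with h0 | h0
    · have : k ≠ 0 := by rintro rfl; simp at hk
      simp [h0, this]
    · have : f x x ^ k = 1 := by
        have := hc x
        rw [pow_succ] at this
        exact mul_right_cancel₀ h0 (by rw [this, one_mul])
      simpa [this] using hk
  obtain ⟨u, hu⟩ := hu
  refine ⟨u, ?_⟩
  rw [Units.eq_mul_inv_iff_mul_eq, hu]
  exact potent_mul_dividedDifference hf hd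

lemma mem_orbit_diag_iff {k : ℕ} (hk : (k : K) ≠ 0) (c : X → K) (hc : ∀ x, c x ^ (k + 1) = c x)
    (f : IncidenceAlgebra K X) :
    f ∈ MulAction.orbit (ConjAct (IncidenceAlgebra K X)ˣ) (diag c) ↔
      f ^ (k + 1) = f ∧ ∀ x, f x x = c x := by
  constructor
  · rintro ⟨u, rfl⟩
    have hd : diag c ^ (k + 1) = diag c := by
      rw [diag_pow]
      congr 1
      exact funext hc
    refine ⟨?_, fun x => ?_⟩
    · change (u • diag c) ^ (k + 1) = u • diag c
      rw [← smul_pow', hd]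
    · have h1 : diagHom x (↑(ConjAct.ofConjAct u) : IncidenceAlgebra K X)
          * diagHom x (↑(ConjAct.ofConjAct u)⁻¹ : IncidenceAlgebra K X) = 1 := by
        rw [← map_mul, Units.mul_inv, map_one]
      change diagHom x (u • diag c) = c x
      rw [ConjAct.units_smul_def, map_mul, map_mul, mul_right_comm, h1, one_mul]
      simp [diag_apply]
  · rintro ⟨hf, hfc⟩
    obtain ⟨u, hu⟩ := exists_conj_diag hk hf
    refine ⟨ConjAct.toConjAct u, ?_⟩
    rw [show c = fun x => f x x from funext fun x => (hfc x).symm]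
    exact hu.symm

/-- Splitting an element with nonzero diagonal into its part commuting with `diag c` and its
remaining entries. -/
noncomputable def splitEquiv (c : X → K) :
    {f : IncidenceAlgebra K X // ∀ x, f x x ≠ 0} ≃
      {f : IncidenceAlgebra K X // (∀ x, f x x ≠ 0) ∧ ∀ x y, c x ≠ c y → f x y = 0} ×
        ({p : X × X // p.1 < p.2 ∧ c p.1 ≠ c p.2} → K) := by
  classical exact
  { toFun := fun f =>
      (⟨⟨fun x y => if c x = c y then f.1 x y else 0,
          fun x y h => by simp [apply_eq_zero_of_not_le h]⟩,
        fun x => by simpa using f.2 x, fun x y h => by simp [h]⟩, fun p => f.1 p.1.1 p.1.2)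
    invFun := fun g =>
      ⟨⟨fun x y => if h : x < y ∧ c x ≠ c y then g.2 ⟨(x, y), h⟩ else g.1.1 x y,
          fun x y h => by simp [apply_eq_zero_of_not_le h, mt le_of_lt h]⟩,
        fun x => by simpa using g.1.2.1 x⟩
    left_inv := by
      rintro ⟨f, hf⟩
      ext x y hxy
      rcases eq_or_ne x y with rfl | hne
      · simp
      · by_cases h : c x = c y
        · simp [h]
        · simp [h, lt_of_le_of_ne hxy hne]
    right_inv := by
      rintro ⟨⟨g, hg, hg'⟩, e⟩
      ext x
      · rename_i y hxy
        by_cases h : c x = c y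
        · simp [h]
        · simp [h, hg' x y h]
      · simp [x.2.1, x.2.2] }

lemma card_orbit_diag (c : X → K) :
    Nat.card (MulAction.orbit (ConjAct (IncidenceAlgebra K X)ˣ) (diag c : IncidenceAlgebra K X))
      = Nat.card K ^ discordantPairs c := by
  classical
  have hG : Nat.card (ConjAct (IncidenceAlgebra K X)ˣ)
      = Nat.card {f : IncidenceAlgebra K X // ∀ x, f x x ≠ 0} := by
    refine Nat.card_congr (ConjAct.ofConjAct.toEquiv.trans ?_)
    refine Equiv.ofBijective (fun u => ⟨u, (isUnit_iff_apply_self_ne_zero _).1 u.isUnit⟩) ⟨?_, ?_⟩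
    · intro u v h
      exact Units.ext (congrArg Subtype.val h)
    · rintro ⟨f, hf⟩
      obtain ⟨u, rfl⟩ := (isUnit_iff_apply_self_ne_zero f).2 hf
      exact ⟨u, rfl⟩
  have mem_stab (u : ConjAct (IncidenceAlgebra K X)ˣ) :
      u ∈ MulAction.stabilizer _ (diag c : IncidenceAlgebra K X) ↔
        ∀ x y, c x ≠ c y → (↑(ConjAct.ofConjAct u) : IncidenceAlgebra K X) x y = 0 := by
    rw [MulAction.mem_stabilizer_iff, ConjAct.units_smul_def, Units.mul_inv_eq_iff_eq_mul]
    constructor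
    · intro h x y hxy
      have := congrFun (DFunLike.congr_fun h x) y
      rw [mul_diag_apply, diag_mul_apply, mul_comm, mul_eq_mul_right_iff] at this
      exact this.resolve_left hxy.symm
    · intro h
      ext x y _
      rw [mul_diag_apply, diag_mul_apply, mul_comm]
      by_cases hxy : c x = c y
      · rw [hxy]
      · rw [h x y hxy, mul_zero, mul_zero]
  have hS : Nat.card (MulAction.stabilizer (ConjAct (IncidenceAlgebra K X)ˣ)
        (diag c : IncidenceAlgebra K X))
      = Nat.card {f : IncidenceAlgebra K X //
          (∀ x, f x x ≠ 0) ∧ ∀ x y, c x ≠ c y → f x y = 0} := by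
    refine Nat.card_congr (Equiv.ofBijective (fun u =>
      ⟨((ConjAct.ofConjAct u.1 : (IncidenceAlgebra K X)ˣ) : IncidenceAlgebra K X),
        (isUnit_iff_apply_self_ne_zero _).1 (Units.isUnit _),
        (mem_stab u.1).1 u.2⟩) ⟨?_, ?_⟩)
    · intro u v h
      exact Subtype.ext (Units.ext (congrArg Subtype.val h))
    · rintro ⟨f, hf, hf'⟩
      obtain ⟨u, rfl⟩ := (isUnit_iff_apply_self_ne_zero f).2 hf
      exact ⟨⟨ConjAct.toConjAct u, (mem_stab _).2 hf'⟩, rfl⟩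
  have : Finite (ConjAct (IncidenceAlgebra K X)ˣ) :=
    Finite.of_equiv _ ConjAct.toConjAct.toEquiv
  have h := Nat.card_congr (MulAction.orbitProdStabilizerEquivGroup
    (ConjAct (IncidenceAlgebra K X)ˣ) (diag c : IncidenceAlgebra K X))
  rw [Nat.card_prod, hG, Nat.card_congr (splitEquiv c), Nat.card_prod, ← hS, mul_comm] at h
  rw [Nat.eq_of_mul_eq_mul_left Nat.card_pos h, Nat.card_fun, discordantPairs]

/-- The number of `(k+1)`-potent elements of an incidence algebra, as a sum over diagonals. -/
theorem card_potent [Fintype X] {k : ℕ} (hk : (k : K) ≠ 0)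
    [Fintype {z : K // z ^ (k + 1) = z}] :
    Nat.card {f : IncidenceAlgebra K X // f ^ (k + 1) = f}
      = ∑ c : X → {z : K // z ^ (k + 1) = z}, Nat.card K ^ discordantPairs c := by
  have key (f : {f : IncidenceAlgebra K X // f ^ (k + 1) = f}) (x : X) :
      f.1 x x ^ (k + 1) = f.1 x x := by
    rw [← apply_self_pow, f.2]
  let D (f : {f : IncidenceAlgebra K X // f ^ (k + 1) = f}) :
      X → {z : K // z ^ (k + 1) = z} := fun x => ⟨f.1 x x, key f x⟩
  rw [Nat.card_congr (Equiv.sigmaFiberEquiv D).symm, Nat.card_sigma]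
  refine sum_congr rfl fun c _ => ?_
  have hd : discordantPairs c = discordantPairs (fun x => (c x : K)) := by
    simp [discordantPairs, Subtype.ext_iff]
  rw [hd, ← card_orbit_diag]
  have mem_orbit := mem_orbit_diag_iff hk (fun x => (c x : K)) fun x => (c x).2
  exact Nat.card_congr
    { toFun := fun f => ⟨f.1.1, (mem_orbit _).2
        ⟨f.1.2, fun x => congrArg Subtype.val (congrFun f.2 x)⟩⟩
      invFun := fun f => ⟨⟨f.1, ((mem_orbit _).1 f.2).1⟩,
        funext fun x => Subtype.ext (((mem_orbit _).1 f.2).2 x)⟩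
      left_inv := fun _ => rfl
      right_inv := fun _ => rfl }

end IncidenceAlgebra

/-- Counting `(k+1)`-potent elements of the incidence algebra of the star poset
`X = {x₀, x₁, …, x_n, y₁, …, y_m}` (two chains glued at the minimum `x₀`, indexed here by
`x : Fin (n+1) → X` with `x 0 = x₀`, and `y : Fin m → X`): their number equals
`N(n+1) · P(m)` where `N(n+1)` is the number of `(n+1)×(n+1)` upper triangular
`(k+1)`-potent matrices over `K` and
`P(m) = ∑_{m₁+⋯+m_s = m} (m!/(m₁!⋯m_s!)) · q^(∑_{i<j} m_i m_j) · q^(m₂+⋯+m_s)`. -/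
theorem stmt_12 {K : Type*} [Field K] [Fintype K] [DecidableEq K] (q k s n m : ℕ)
    (hq : Fintype.card K = q) (hk : 1 ≤ k)
    (hchar_k : (k : K) ≠ 0) (hchar_k1 : ((k + 1 : ℕ) : K) ≠ 0)
    (hs : (Finset.univ.filter (fun x : K => x ^ (k + 1) = x)).card = s) (hs0 : 0 < s)
    (X : Type*) [Fintype X] [PartialOrder X] [DecidableEq X] [LocallyFiniteOrder X]
    (x : Fin (n + 1) → X) (y : Fin m → X)
    (hxx : ∀ i j, x i ≤ x j ↔ i ≤ j)
    (hyy : ∀ i j, y i ≤ y j ↔ i ≤ j)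
    (hxy : ∀ i j, x i ≤ y j ↔ i = 0)
    (hyx : ∀ i j, ¬ y j ≤ x i)
    (hxinj : Function.Injective x) (hyinj : Function.Injective y)
    (hne : ∀ i j, x i ≠ y j)
    (hcover : ∀ w : X, (∃ i, w = x i) ∨ (∃ j, w = y j)) :
    Nat.card {f : IncidenceAlgebra K X // f ^ (k + 1) = f}
      = Nat.card {A : Matrix (Fin (n + 1)) (Fin (n + 1)) K //
            A ^ (k + 1) = A ∧ ∀ i j : Fin (n + 1), j < i → A i j = 0}
        * ∑ v ∈ Finset.Nat.antidiagonalTuple s m,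
            Nat.multinomial Finset.univ v *
              q ^ (∑ i : Fin s, ∑ j ∈ Finset.Ioi i, v i * v j) *
              q ^ (∑ j ∈ Finset.univ.filter (fun j : Fin s => j ≠ ⟨0, hs0⟩), v j) := by
  classical
  let e : Fin (n + 1) ⊕ Fin m ≃ X := Equiv.ofBijective (Sum.elim x y)
    ⟨hxinj.sumElim hyinj hne, fun w => by
      rcases hcover w with ⟨i, rfl⟩ | ⟨j, rfl⟩
      · exact ⟨.inl i, rfl⟩
      · exact ⟨.inr j, rfl⟩⟩
  have hcard : Fintype.card {z : K // z ^ (k + 1) = z} = s := by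
    rw [Fintype.card_subtype, hs]
  have hN : Nat.card {A : Matrix (Fin (n + 1)) (Fin (n + 1)) K //
        A ^ (k + 1) = A ∧ ∀ i j : Fin (n + 1), j < i → A i j = 0}
      = ∑ a : Fin (n + 1) → {z : K // z ^ (k + 1) = z}, q ^ discordantPairs a := by
    rw [← hq, ← Nat.card_eq_fintype_card, ← IncidenceAlgebra.card_potent hchar_k,
      IncidenceAlgebra.card_potent_eq_card_matrix]
    simp only [not_le]
  rw [hN, IncidenceAlgebra.card_potent hchar_k, Nat.card_eq_fintype_card, hq, sum_mul,
    ← ((Equiv.sumArrowEquivProdArrow _ _ _).symm.trans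
      (Equiv.arrowCongr e (Equiv.refl _))).sum_comp, Fintype.sum_prod_type]
  refine sum_congr rfl fun a _ => ?_
  rw [← sum_pow_discordantPairs hcard ⟨0, hs0⟩ (a 0), mul_sum]
  refine sum_congr rfl fun b _ => ?_
  rw [← pow_add, discordantPairs_star e hxx hyy hxy hyx]
  simp
end

section
/- Let K be a finite field with q elements whose characteristic divides neither k nor k+1 (k ≥ 1), and let s be the number of elements x ∈ K with x^(k+1) = x. Let Y be the poset on {r₁, …, r_n, s₁, …, s_m, t₁, …, t_l} with relations: r₁ ≤ r₂ ≤ ⋯ ≤ r_n; s₁ ≤ s₂ ≤ ⋯ ≤ s_m; t₁ ≤ t₂ ≤ ⋯ ≤ t_l; r_n ≤ s_i for all i and r_n ≤ t_j for all j (hence every r_a lies below every s_i and every t_j); and no s_i is comparable with any t_j. Then the number of elements f of the incidence algebra I(Y, K) satisfying f^(k+1) = f equals Σ (n!/(n₁!⋯n_s!)) · (m!/(m₁!⋯m_s!)) · (l!/(l₁!⋯l_s!)) · q^(Σ_{1 ≤ i < j ≤ s} (n_i·n_j + m_i·m_j + l_i·l_j)) · q^(Σ_{1 ≤ i ≠ j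 ≤ s} n_i·(m_j + l_j)), where the sum ranges over all tuples of natural numbers (n₁,…,n_s), (m₁,…,m_s), (l₁,…,l_s) with n₁+⋯+n_s = n, m₁+⋯+m_s = m and l₁+⋯+l_s = l. -/
namespace IncidenceAlgebra

open Finset

variable {K X : Type*} [Field K]

lemma geom_sum_sub_one_ne_zero {k : ℕ} (hk : 1 ≤ k) (hkK : (k : K) ≠ 0) {z : K}
    (hz : z ^ (k + 1) = z) :
    (∑ i ∈ range (k + 1), z ^ i * z ^ (k + 1 - 1 - i)) - 1 ≠ 0 := by
  have hsum : ∑ i ∈ range (k + 1), z ^ i * z ^ (k + 1 - 1 - i) = (k + 1) * z ^ k := by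
    rw [sum_congr rfl (g := fun _ => z ^ k)]
    · simp
    · intro i hi
      rw [mem_range] at hi
      rw [← pow_add]
      congr 1
      omega
  rw [hsum]
  rcases eq_or_ne z 0 with rfl | h0
  · simp [show k ≠ 0 by omega]
  · have : z ^ k = 1 := by
      rw [pow_succ] at hz
      exact mul_right_cancel₀ h0 (by rw [hz, one_mul])
    simpa [this] using hkK

variable [PartialOrder X] [LocallyFiniteOrder X]

lemma card_Icc_lt {x y a b : X} (hxa : x ≤ a) (hab : a ≤ b) (hby : b ≤ y)
    (hne : ¬(a = x ∧ b = y)) : #(Icc a b) < #(Icc x y) := by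
  refine card_lt_card ⟨Icc_subset_Icc hxa hby, fun hsub => hne ⟨?_, ?_⟩⟩
  · exact le_antisymm
      (mem_Icc.1 (hsub (left_mem_Icc.2 (hxa.trans (hab.trans hby))))).1 hxa
  · exact le_antisymm hby
      (mem_Icc.1 (hsub (right_mem_Icc.2 (hxa.trans (hab.trans hby))))).2

lemma apply_eq_zero_of_commute {f g : IncidenceAlgebra K X} (hfg : Commute f g) {x y : X}
    (hne : f x x ≠ f y y)
    (h : ∀ a b, x ≤ a → a ≤ b → b ≤ y → ¬(a = x ∧ b = y) → g a b = 0) : g x y = 0 := by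
  by_cases hxy : x ≤ y
  · have key := congrArg (fun e : IncidenceAlgebra K X => e x y) hfg.eq
    simp only [mul_apply] at key
    rw [sum_eq_single_of_mem x (by simp [hxy]), sum_eq_single_of_mem y (by simp [hxy])] at key
    · have : (f x x - f y y) * g x y = 0 := by linear_combination key
      exact (mul_eq_zero.1 this).resolve_left (sub_ne_zero.2 hne)
    · intro z hz hz'
      rw [mem_Icc] at hz
      rw [h x z le_rfl hz.1 hz.2 fun h => hz' h.2, zero_mul]
    · intro z hz hz'
      rw [mem_Icc] at hz
      rw [h z y hz.1 hz.2 le_rfl fun h => hz' h.1, mul_zero]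
  · exact apply_eq_zero_of_not_le hxy g

variable [DecidableEq X]

lemma pow_apply_self (f : IncidenceAlgebra K X) (j : ℕ) (x : X) : (f ^ j) x x = f x x ^ j := by
  induction j with
  | zero => simp
  | succ j ih => simp [pow_succ, ih]

lemma pow_apply_congr {f g : IncidenceAlgebra K X} {x y : X}
    (h : ∀ a b, x ≤ a → a ≤ b → b ≤ y → f a b = g a b) (j : ℕ) :
    (f ^ j) x y = (g ^ j) x y := by
  induction j generalizing y with
  | zero => simp
  | succ j ih =>
    simp only [pow_succ, mul_apply]
    refine sum_congr rfl fun z hz => ?_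
    rw [mem_Icc] at hz
    rw [ih fun a b ha hab hb => h a b ha hab (hb.trans hz.2), h z y hz.1 hz.2 le_rfl]

lemma pow_apply_sub_pow_apply {f g : IncidenceAlgebra K X} {x y : X} (hxy : x < y)
    (h : ∀ a b, x ≤ a → a ≤ b → b ≤ y → ¬(a = x ∧ b = y) → f a b = g a b) (j : ℕ) :
    (f ^ j) x y - (g ^ j) x y =
      (∑ i ∈ range j, f x x ^ i * f y y ^ (j - 1 - i)) * (f x y - g x y) := by
  induction j with
  | zero => simp
  | succ j ih =>
    have hx : f x x = g x x := h x x le_rfl le_rfl hxy.le fun h => hxy.ne h.2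
    have hy : f y y = g y y := h y y hxy.le le_rfl le_rfl fun h => hxy.ne' h.1
    simp only [pow_succ _ j, mul_apply, ← sum_sub_distrib]
    rw [← sum_subset (s₁ := {x, y}), sum_pair hxy.ne, pow_apply_self, pow_apply_self, ← hx, ← hy,
      ← mul_sub, ← sub_mul, ih, add_tsub_cancel_right, geom_sum₂_succ_eq]
    · ring
    · intro z
      simp only [mem_insert, mem_singleton, mem_Icc]
      rintro (rfl | rfl) <;> simp [hxy.le]
    · intro z hz hz'
      simp only [mem_insert, mem_singleton, mem_Icc, not_or] at hz hz'
      rw [h z y hz.1 hz.2 le_rfl fun h => hz'.1 h.1,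
        pow_apply_congr (fun a b ha hab hb => h a b ha hab (hb.trans hz.2)
          fun h => hz'.2 (le_antisymm hz.2 (h.2 ▸ hb))), sub_self]

lemma eq_of_pow_succ_eq_self {k : ℕ} (hk : 1 ≤ k) (hkK : (k : K) ≠ 0)
    {f g : IncidenceAlgebra K X} (hf : f ^ (k + 1) = f) (hg : g ^ (k + 1) = g)
    (hdiag : ∀ x, f x x = g x x) (hoff : ∀ x y, x < y → f x x ≠ f y y → f x y = g x y) :
    f = g := by
  have main : ∀ N : ℕ, ∀ x y : X, #(Icc x y) = N → f x y = g x y := by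
    intro N
    induction N using Nat.strong_induction_on with
    | _ N ih =>
      rintro x y rfl
      by_cases hle : x ≤ y
      · rcases hle.eq_or_lt with rfl | hxy
        · exact hdiag x
        · by_cases hne : f x x = f y y
          · have hkey := pow_apply_sub_pow_apply hxy
              (fun a b ha hab hb hn => ih _ (card_Icc_lt ha hab hb hn) a b rfl) (k + 1)
            rw [hf, hg, ← hne] at hkey
            have hz : f x x ^ (k + 1) = f x x := by rw [← pow_apply_self, hf]
            have h0 := geom_sum_sub_one_ne_zero hk hkK hz
            refine sub_eq_zero.1 ((mul_eq_zero.1 ?_).resolve_left h0)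
            linear_combination -hkey
          · exact hoff x y hxy hne
      · rw [apply_eq_zero_of_not_le hle, apply_eq_zero_of_not_le hle]
  ext x y _
  exact main _ x y rfl

lemma exists_pow_succ_eq_self_of_card_le {k : ℕ} (hk : 1 ≤ k) (hkK : (k : K) ≠ 0)
    (d : X → K) (hd : ∀ x, d x ^ (k + 1) = d x) (h : X → X → K) (N : ℕ) :
    ∃ f : IncidenceAlgebra K X, (∀ x, f x x = d x) ∧
      (∀ x y, x < y → d x ≠ d y → f x y = h x y) ∧
      ∀ x y, #(Icc x y) ≤ N → (f ^ (k + 1)) x y = f x y := by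
  classical
  induction N with
  | zero =>
    refine ⟨⟨fun x y => if x = y then d x else if x < y then h x y else 0, fun x y hxy => ?_⟩,
      fun x => ?_, fun x y hxy _ => ?_, fun x y hxy => ?_⟩
    · rw [if_neg fun e => hxy e.le, if_neg fun e => hxy e.le]
    · exact if_pos rfl
    · exact (if_neg hxy.ne).trans (if_pos hxy)
    · have hle : ¬x ≤ y := by simpa using hxy
      rw [apply_eq_zero_of_not_le hle, apply_eq_zero_of_not_le hle]
  | succ N ih =>
    obtain ⟨f, hdiag, hoff, hpow⟩ := ih
    let c : X → K := fun x => (∑ i ∈ range (k + 1), d x ^ i * d x ^ (k + 1 - 1 - i)) - 1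
    have hc : ∀ x, c x ≠ 0 := fun x => geom_sum_sub_one_ne_zero hk hkK (hd x)
    let f' : IncidenceAlgebra K X :=
      ⟨fun x y => if #(Icc x y) = N + 1 ∧ x < y ∧ d x = d y then
          f x y - ((f ^ (k + 1)) x y - f x y) / c x else f x y, fun x y hxy => by
        rw [if_neg fun e => hxy e.2.1.le, apply_eq_zero_of_not_le hxy]⟩
    have hf' : ∀ x y, f' x y = if #(Icc x y) = N + 1 ∧ x < y ∧ d x = d y then
          f x y - ((f ^ (k + 1)) x y - f x y) / c x else f x y := fun _ _ => rfl
    have hdiag' : ∀ x, f' x x = d x := fun x => by simp [hf', hdiag]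
    have hsmall : ∀ x y, #(Icc x y) ≤ N → f' x y = f x y := fun x y hxy => by
      rw [hf', if_neg]
      rintro ⟨e, -⟩
      omega
    have hpow' : ∀ x y, #(Icc x y) ≤ N → (f' ^ (k + 1)) x y = f' x y := fun x y hxy => by
      rw [hsmall x y hxy, ← hpow x y hxy]
      exact pow_apply_congr (fun a b ha hab hb =>
        hsmall a b ((card_le_card (Icc_subset_Icc ha hb)).trans hxy)) _
    refine ⟨f', hdiag', fun x y hxy hne => ?_, fun x y hxy => ?_⟩
    · rw [hf', if_neg fun e => hne e.2.2, hoff x y hxy hne]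
    · rcases Nat.le_or_eq_of_le_succ hxy with hN | hN
      · exact hpow' x y hN
      have hle : x ≤ y := by
        rw [← nonempty_Icc, ← card_pos]
        omega
      have hsub : ∀ a b, x ≤ a → a ≤ b → b ≤ y → ¬(a = x ∧ b = y) → #(Icc a b) ≤ N :=
        fun a b ha hab hb hn => by
          have := card_Icc_lt ha hab hb hn
          omega
      rcases hle.eq_or_lt with rfl | hlt
      · rw [pow_apply_self, hdiag', hd]
      by_cases hne : d x = d y
      · have hkey := pow_apply_sub_pow_apply (f := f') (g := f) hlt
          (fun a b ha hab hb hn => hsmall a b (hsub a b ha hab hb hn)) (k + 1)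
        rw [hdiag', hdiag', ← hne] at hkey
        have hval : (f' x y - f x y) * c x = - ((f ^ (k + 1)) x y - f x y) := by
          rw [hf', if_pos ⟨hN, hlt, hne⟩]
          have := hc x
          field_simp
          ring
        simp only [c] at hval
        linear_combination hkey + hval
      · have hcomm : Commute f' (f' ^ (k + 1) - f') :=
          ((Commute.refl f').pow_right _).sub_right (Commute.refl f')
        have := apply_eq_zero_of_commute hcomm (x := x) (y := y) (by simpa [hdiag'] using hne)
          fun a b ha hab hb hn => by
            rw [sub_apply, hpow' a b (hsub a b ha hab hb hn), sub_self]
        exact sub_eq_zero.1 this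

lemma exists_pow_succ_eq_self [Fintype X] {k : ℕ} (hk : 1 ≤ k) (hkK : (k : K) ≠ 0)
    (d : X → K) (hd : ∀ x, d x ^ (k + 1) = d x) (h : X → X → K) :
    ∃ f : IncidenceAlgebra K X, f ^ (k + 1) = f ∧ (∀ x, f x x = d x) ∧
      ∀ x y, x < y → d x ≠ d y → f x y = h x y := by
  obtain ⟨f, hdiag, hoff, hpow⟩ :=
    exists_pow_succ_eq_self_of_card_le hk hkK d hd h (Fintype.card X)
  exact ⟨f, by ext x y _; exact hpow x y (card_le_univ _), hdiag, hoff⟩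

/-- The `(k+1)`-potent elements of an incidence algebra over a finite field are parametrised by
their diagonal together with arbitrary entries at the pairs `x < y` with distinct diagonal
entries. -/
theorem card_pow_succ_eq_self [Fintype K] [DecidableEq K] [Fintype X] [DecidableLT X] {k : ℕ}
    (hk : 1 ≤ k) (hkK : (k : K) ≠ 0) :
    Nat.card {f : IncidenceAlgebra K X // f ^ (k + 1) = f} =
      ∑ d : X → {z : K // z ^ (k + 1) = z},
        Fintype.card K ^ #{p : X × X | p.1 < p.2 ∧ d p.1 ≠ d p.2} := by
  let φ : {f : IncidenceAlgebra K X // f ^ (k + 1) = f} →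
      (d : X → {z : K // z ^ (k + 1) = z}) × ({p : X × X // p.1 < p.2 ∧ d p.1 ≠ d p.2} → K) :=
    fun f => ⟨fun x => ⟨f.1 x x, by rw [← pow_apply_self, f.2]⟩, fun p => f.1 p.1.1 p.1.2⟩
  have hφ : Function.Bijective φ := by
    constructor
    · rintro ⟨f, hf⟩ ⟨g, hg⟩ hfg
      refine Subtype.ext (eq_of_pow_succ_eq_self hk hkK hf hg (fun x => ?_) fun x y hxy hne => ?_)
      · exact congrArg (fun s => (s.1 x : K)) hfg
      · have hdx : f x x = g x x := congrArg (fun s => (s.1 x : K)) hfg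
        have hdy : f y y = g y y := congrArg (fun s => (s.1 y : K)) hfg
        have := congrArg (fun s => if h : x < y ∧ s.1 x ≠ s.1 y then s.2 ⟨(x, y), h⟩ else 0) hfg
        simpa [φ, hxy, hne, hdx ▸ hdy ▸ hne] using this
    · rintro ⟨d, h⟩
      obtain ⟨f, hf, hdiag, hoff⟩ := exists_pow_succ_eq_self hk hkK (fun x => (d x : K))
        (fun x => (d x).2)
        (fun x y => if hxy : x < y ∧ d x ≠ d y then h ⟨(x, y), hxy⟩ else 0)
      refine ⟨⟨f, hf⟩, ?_⟩
      obtain rfl : d = fun x => ⟨f x x, by rw [← pow_apply_self, hf]⟩ :=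
        funext fun x => Subtype.ext (hdiag x).symm
      simp only [φ]
      congr 1
      funext ⟨⟨x, y⟩, hxy⟩
      have := hoff x y hxy.1 fun e => hxy.2 (Subtype.ext e)
      rw [this, dif_pos hxy]
  rw [Nat.card_congr (Equiv.ofBijective φ hφ), Nat.card_eq_fintype_card, Fintype.card_sigma]
  refine sum_congr rfl fun d _ => ?_
  rw [Fintype.card_fun, Fintype.card_subtype]

end IncidenceAlgebra

namespace Finset

/-- The number of maps from `Fin n` with prescribed fibre sizes is a multinomial coefficient. -/
lemma card_filter_card_fiber_eq {σ : Type*} [Fintype σ] [DecidableEq σ] (n : ℕ) (v : σ → ℕ)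
    (hv : ∑ i, v i = n) :
    #{d : Fin n → σ | (fun i => #{x | d x = i}) = v} = Nat.multinomial univ v := by
  classical
  let w : σ →₀ ℕ := Finsupp.equivFunOnFinite.symm v
  have h := MvPolynomial.coeff_sum_X_pow_of_fintype (R := ℕ) w n
  have hsum : w.sum (fun _ m => m) = n := by
    rw [Finsupp.sum_fintype _ _ fun _ => rfl]
    exact hv
  rw [if_pos hsum, Finsupp.multinomial_eq_of_support_subset (subset_univ _),
    Fintype.sum_pow, MvPolynomial.coeff_sum] at h
  refine Eq.trans ?_ h
  rw [card_filter]
  refine sum_congr rfl fun d _ => ?_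
  have hprod : ∏ i, (MvPolynomial.X (d i) : MvPolynomial σ ℕ) =
      MvPolynomial.monomial (Finsupp.equivFunOnFinite.symm fun i => #{x | d x = i}) 1 := by
    simp only [MvPolynomial.X, ← MvPolynomial.monomial_sum_one]
    refine congrArg (fun t => MvPolynomial.monomial t 1) (Finsupp.ext fun i => ?_)
    simp [Finsupp.single_apply, Finsupp.finsetSum_apply]
  rw [hprod, MvPolynomial.coeff_monomial]
  simp [w]

lemma sum_comp_card_fiber {s : ℕ} (n : ℕ) (F : (Fin s → ℕ) → ℕ) :
    ∑ d : Fin n → Fin s, F (fun i => #{x | d x = i}) =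
      ∑ v ∈ Nat.antidiagonalTuple s n, Nat.multinomial univ v * F v := by
  rw [← sum_fiberwise_of_maps_to (t := Nat.antidiagonalTuple s n)
    (g := fun d : Fin n → Fin s => fun i => #{x | d x = i})]
  · refine sum_congr rfl fun v hv => ?_
    rw [sum_congr rfl (g := fun _ => F v), sum_const, smul_eq_mul,
      card_filter_card_fiber_eq n v (Nat.mem_antidiagonalTuple.1 hv)]
    intro d hd
    rw [(mem_filter.1 hd).2]
  · intro d _
    rw [Nat.mem_antidiagonalTuple, ← card_eq_sum_card_fiberwise fun _ _ => mem_univ _, card_univ,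
      Fintype.card_fin]

lemma sum_comp_eq_sum_card_fiber_mul {α σ : Type*} [Fintype α] [Fintype σ] [DecidableEq σ]
    (d : α → σ) (G : σ → ℕ) : ∑ x, G (d x) = ∑ i, #{x | d x = i} * G i := by
  rw [← sum_fiberwise (g := d)]
  refine sum_congr rfl fun i _ => ?_
  rw [sum_congr rfl (g := fun _ => G i), sum_const, smul_eq_mul]
  intro x hx
  rw [(mem_filter.1 hx).2]

lemma sum_sum_ite_eq_sum_card_fiber_mul {α β σ : Type*} [Fintype α] [Fintype β] [Fintype σ]
    [DecidableEq σ] (d : α → σ) (e : β → σ) (r : σ → σ → Prop) [DecidableRel r] :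
    (∑ x, ∑ y, if r (d x) (e y) then 1 else 0) =
      ∑ i, ∑ j with r i j, #{x | d x = i} * #{y | e y = j} := by
  rw [sum_comp_eq_sum_card_fiber_mul d fun i => ∑ y, if r i (e y) then 1 else 0]
  refine sum_congr rfl fun i _ => ?_
  rw [sum_comp_eq_sum_card_fiber_mul e fun j => if r i j then 1 else 0, ← mul_sum, sum_filter]
  simp only [mul_ite, mul_one, mul_zero]

lemma sum_sum_lt_ne_eq_sum_card_fiber_mul {α : Type*} [Fintype α] [LinearOrder α] {s : ℕ}
    (d : α → Fin s) :
    (∑ x, ∑ y, if x < y ∧ d x ≠ d y then 1 else 0) =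
      ∑ i, ∑ j ∈ Ioi i, #{x | d x = i} * #{x | d x = j} := by
  have hIoi : ∀ i : Fin s, Ioi i = ({j | i < j} : Finset (Fin s)) := fun i => by ext; simp
  simp only [hIoi]
  rw [← sum_sum_ite_eq_sum_card_fiber_mul d d (· < ·)]
  have hsplit : ∀ x y, (if x < y ∧ d x ≠ d y then 1 else 0) =
      (if x < y ∧ d x < d y then 1 else 0) + if x < y ∧ d y < d x then 1 else 0 := by
    intro x y
    grind
  have hjoin : ∀ x y, (if d x < d y then 1 else 0) =
      (if x < y ∧ d x < d y then 1 else 0) + if y < x ∧ d x < d y then 1 else 0 := by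
    intro x y
    grind
  simp only [hsplit, hjoin, sum_add_distrib]
  congr 1
  exact sum_comm

end Finset

/-- The number of strictly comparable pairs of the `Y` poset joining points of different colours,
when `v`, `w`, `u` count the points of each colour on the lower chain and the two upper chains. -/
def pairExponent {s : ℕ} (v w u : Fin s → ℕ) : ℕ :=
  (∑ i : Fin s, ∑ j ∈ Finset.Ioi i, (v i * v j + w i * w j + u i * u j)) +
    ∑ i : Fin s, ∑ j ∈ Finset.univ.filter (fun j : Fin s => j ≠ i), v i * (w j + u j)

/-- Counting `(k+1)`-potent elements of the incidence algebra of the `Y` poset: a chain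
`r : Fin n → X` lying below two chains `t : Fin m → X` and `w : Fin l → X`, the latter two
being mutually incomparable. Their number equals
`∑ (n!/(n₁!⋯n_s!))(m!/(m₁!⋯m_s!))(l!/(l₁!⋯l_s!)) ·
  q^(∑_{i<j}(n_i n_j + m_i m_j + l_i l_j)) · q^(∑_{i≠j} n_i(m_j + l_j))`. -/
theorem stmt_15 {K : Type*} [Field K] [Fintype K] [DecidableEq K] (q k s n m l : ℕ)
    (hq : Fintype.card K = q) (hk : 1 ≤ k)
    (hchar_k : (k : K) ≠ 0) (hchar_k1 : ((k + 1 : ℕ) : K) ≠ 0)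
    (hs : (Finset.univ.filter (fun x : K => x ^ (k + 1) = x)).card = s)
    (X : Type*) [Fintype X] [PartialOrder X] [DecidableEq X] [LocallyFiniteOrder X]
    (a : Fin n → X) (b : Fin m → X) (c : Fin l → X)
    (haa : ∀ i j, a i ≤ a j ↔ i ≤ j)
    (hbb : ∀ i j, b i ≤ b j ↔ i ≤ j)
    (hcc : ∀ i j, c i ≤ c j ↔ i ≤ j)
    (hab : ∀ i j, a i ≤ b j) (hac : ∀ i j, a i ≤ c j)
    (hba : ∀ i j, ¬ b j ≤ a i) (hca : ∀ i j, ¬ c j ≤ a i)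
    (hbc : ∀ i j, ¬ b i ≤ c j) (hcb : ∀ i j, ¬ c i ≤ b j)
    (hainj : Function.Injective a) (hbinj : Function.Injective b)
    (hcinj : Function.Injective c)
    (hab' : ∀ i j, a i ≠ b j) (hac' : ∀ i j, a i ≠ c j) (hbc' : ∀ i j, b i ≠ c j)
    (hcover : ∀ w : X, (∃ i, w = a i) ∨ (∃ j, w = b j) ∨ (∃ p, w = c p)) :
    Nat.card {f : IncidenceAlgebra K X // f ^ (k + 1) = f}
      = ∑ v ∈ Finset.Nat.antidiagonalTuple s n,
          ∑ w ∈ Finset.Nat.antidiagonalTuple s m,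
            ∑ u ∈ Finset.Nat.antidiagonalTuple s l,
              Nat.multinomial Finset.univ v * Nat.multinomial Finset.univ w *
                Nat.multinomial Finset.univ u *
                q ^ (∑ i : Fin s, ∑ j ∈ Finset.Ioi i,
                      (v i * v j + w i * w j + u i * u j)) *
                q ^ (∑ i : Fin s, ∑ j ∈ Finset.univ.filter (fun j : Fin s => j ≠ i),
                      v i * (w j + u j)) := by
  classical
  let e : Fin n ⊕ (Fin m ⊕ Fin l) ≃ X := Equiv.ofBijective (Sum.elim a (Sum.elim b c)) (by
    constructor
    · exact hainj.sumElim (hbinj.sumElim hcinj hbc') fun i => by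
        rintro (j | j)
        exacts [hab' i j, hac' i j]
    · intro x
      rcases hcover x with ⟨i, rfl⟩ | ⟨i, rfl⟩ | ⟨i, rfl⟩
      exacts [⟨.inl i, rfl⟩, ⟨.inr (.inl i), rfl⟩, ⟨.inr (.inr i), rfl⟩])
  let ε : Fin s ≃ {z : K // z ^ (k + 1) = z} :=
    (finCongr (by rw [Fintype.card_subtype, hs])).trans (Fintype.equivFin _).symm
  let ψ : (Fin n → Fin s) × (Fin m → Fin s) × (Fin l → Fin s) ≃
      (X → {z : K // z ^ (k + 1) = z}) :=
    ((Equiv.prodCongr (Equiv.refl _) (Equiv.sumArrowEquivProdArrow _ _ _).symm).trans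
      (Equiv.sumArrowEquivProdArrow _ _ _).symm).trans (Equiv.arrowCongr e ε)
  have hψ : ∀ d x, ψ d (e x) = ε (Sum.elim d.1 (Sum.elim d.2.1 d.2.2) x) := fun d x => by
    rcases x with x | x | x <;> simp [ψ, Equiv.sumArrowEquivProdArrow]
  have he_a : ∀ i, e (.inl i) = a i := fun _ => rfl
  have he_b : ∀ i, e (.inr (.inl i)) = b i := fun _ => rfl
  have he_c : ∀ i, e (.inr (.inr i)) = c i := fun _ => rfl
  have hlt_a : ∀ i j, a i < a j ↔ i < j := fun i j => by
    rw [lt_iff_le_not_ge, lt_iff_le_not_ge, haa, haa]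
  have hlt_b : ∀ i j, b i < b j ↔ i < j := fun i j => by
    rw [lt_iff_le_not_ge, lt_iff_le_not_ge, hbb, hbb]
  have hlt_c : ∀ i j, c i < c j ↔ i < j := fun i j => by
    rw [lt_iff_le_not_ge, lt_iff_le_not_ge, hcc, hcc]
  have hlt_ab : ∀ i j, a i < b j := fun i j => lt_of_le_not_ge (hab i j) (hba i j)
  have hlt_ac : ∀ i j, a i < c j := fun i j => lt_of_le_not_ge (hac i j) (hca i j)
  have hlt_ba : ∀ i j, ¬ b j < a i := fun i j h => hba i j h.le
  have hlt_ca : ∀ i j, ¬ c j < a i := fun i j h => hca i j h.le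
  have hlt_bc : ∀ i j, ¬ b i < c j := fun i j h => hbc i j h.le
  have hlt_cb : ∀ i j, ¬ c i < b j := fun i j h => hcb i j h.le
  have hexp : ∀ d, (Finset.univ.filter
      fun p : X × X => p.1 < p.2 ∧ ψ d p.1 ≠ ψ d p.2).card =
      pairExponent (fun i => (Finset.univ.filter fun x => d.1 x = i).card)
        (fun i => (Finset.univ.filter fun x => d.2.1 x = i).card)
        (fun i => (Finset.univ.filter fun x => d.2.2 x = i).card) := by
    rintro ⟨d₁, d₂, d₃⟩
    rw [Finset.card_filter, Fintype.sum_prod_type, ← e.sum_comp]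
    simp only [← e.sum_comp (fun y => ite (_ < y ∧ _) 1 0), hψ, ne_eq,
      EmbeddingLike.apply_eq_iff_eq,
      Fintype.sum_sum_type, Sum.elim_inl, Sum.elim_inr]
    simp only [he_a, he_b, he_c, hlt_a, hlt_b, hlt_c,
      hlt_ab, hlt_ac, hlt_ba, hlt_ca, hlt_bc, hlt_cb, true_and, false_and, if_false,
      Finset.sum_const_zero, zero_add, add_zero, Finset.sum_add_distrib]
    have h₁ := Finset.sum_sum_lt_ne_eq_sum_card_fiber_mul d₁
    have h₂ := Finset.sum_sum_lt_ne_eq_sum_card_fiber_mul d₂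
    have h₃ := Finset.sum_sum_lt_ne_eq_sum_card_fiber_mul d₃
    have h₁₂ := Finset.sum_sum_ite_eq_sum_card_fiber_mul d₁ d₂ (fun i j => ¬ i = j)
    have h₁₃ := Finset.sum_sum_ite_eq_sum_card_fiber_mul d₁ d₃ (fun i j => ¬ i = j)
    simp only [ne_eq] at h₁ h₂ h₃
    rw [h₁, h₂, h₃, h₁₂, h₁₃]
    have hne : ∀ i : Fin s, Finset.univ.filter (fun j => ¬ i = j) =
        Finset.univ.filter (fun j => j ≠ i) := fun i => by
      ext
      simp [eq_comm]
    simp only [pairExponent, mul_add, Finset.sum_add_distrib, hne]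
    ring
  rw [IncidenceAlgebra.card_pow_succ_eq_self hk hchar_k, hq, ← ψ.sum_comp]
  simp only [hexp, Fintype.sum_prod_type]
  rw [Finset.sum_comp_card_fiber n fun v => ∑ d₂ : Fin m → Fin s, ∑ d₃ : Fin l → Fin s,
    q ^ pairExponent v (fun i => (Finset.univ.filter fun x => d₂ x = i).card)
      (fun i => (Finset.univ.filter fun x => d₃ x = i).card)]
  refine Finset.sum_congr rfl fun v _ => ?_
  rw [Finset.sum_comp_card_fiber m fun w => ∑ d₃ : Fin l → Fin s,
    q ^ pairExponent v w (fun i => (Finset.univ.filter fun x => d₃ x = i).card), Finset.mul_sum]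
  refine Finset.sum_congr rfl fun w _ => ?_
  rw [Finset.sum_comp_card_fiber l fun u => q ^ pairExponent v w u, Finset.mul_sum, Finset.mul_sum]
  refine Finset.sum_congr rfl fun u _ => ?_
  rw [pairExponent, pow_add]
  ring
end
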